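/- arXiv:1607.07205 — 2 statements merged into one kernel-verified Lean document; each statement's English description precedes it below -/
import Mathlib

section
/- Let R be a commutative principal ideal domain and A ∈ sl_n(R) a trace-zero matrix with n ≥ 3. Then there exist trace-zero matrices X, Y ∈ sl_n(R) such that XY − YX = A. Moreover, X can be chosen such that for every maximal ideal p of R the reduction X mod p is gl_n(R/p)-regular, and such that X mod p is sl_n(R/p)-regular for every maximal ideal p for which A mod p is not a scalar matrix. -/
open Matrix

/-- The centralizer of a matrix `X` inside all `n × n` matrices, as a submodule. -/
def glCent {R : Type*} [CommRing R] {n : ℕ} (X : Matrix (Fin n) (Fin n) R) :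
    Submodule R (Matrix (Fin n) (Fin n) R) where
  carrier := {Y | X * Y = Y * X}
  add_mem' := fun {a b} ha hb => by
    simp only [Set.mem_setOf_eq] at *
    rw [Matrix.mul_add, Matrix.add_mul, ha, hb]
  zero_mem' := by simp
  smul_mem' := fun c a ha => by
    simp only [Set.mem_setOf_eq] at *
    rw [Matrix.mul_smul, Matrix.smul_mul, ha]

/-- The centralizer of a matrix `X` inside the trace-zero `n × n` matrices, as a submodule. -/
def slCent {R : Type*} [CommRing R] {n : ℕ} (X : Matrix (Fin n) (Fin n) R) :
    Submodule R (Matrix (Fin n) (Fin n) R) where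
  carrier := {Y | Y.trace = 0 ∧ X * Y = Y * X}
  add_mem' := fun {a b} ha hb =>
    ⟨by rw [trace_add, ha.1, hb.1, add_zero],
     by rw [Matrix.mul_add, Matrix.add_mul, ha.2, hb.2]⟩
  zero_mem' := ⟨by simp, by simp⟩
  smul_mem' := fun c a ha =>
    ⟨by rw [trace_smul, ha.1, smul_zero],
     by rw [Matrix.mul_smul, Matrix.smul_mul, ha.2]⟩

/-!
Write `A = δ(a + bA₀)` with `a`, `b` coprime and `A₀` not scalar modulo any maximal ideal.

Normal form. Among the values `w A₀ v` at orthogonal pairs `w v = 0`, take one that is minimal for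
divisibility, at unimodular `w` and `v`. If it lay in a maximal ideal `p`, minimality would force
all `w'` orthogonal to `v` to be eigenvectors of `A₀` modulo `p` for one eigenvalue; since `n ≥ 3`,
`v` can be moved, and `A₀` would be scalar modulo `p`. So the value is a unit, and may be taken to
be `1`. Then `w` and `w(A₀ - α)`, for a suitable `α`, are part of a basis, in which `A₀ - α` becomes
a matrix `N` with first row `(0, 1, 0, …, 0)`. As `a + bA₀ = (a + bα) + b(A₀ - α)`, it remains to
treat `a + bN`.

Solution. Let `M` be the companion matrix of `x ^ (k + 1) - b`, where `n = k + 2`, and let `X` be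
`M` bordered by a zero row and a column `u`. Solving `[X, Y] = a + bN` comes down to an equation
`[M, Z] = C`, which is solvable exactly when `C` is orthogonal to the powers of `M` for the trace
form; this determines `u`, with last entry `a`.

Regularity. `X ^ (k + 1) - b` maps a row `(c, 1, 0, …, 0)` to `(a - bc, 0, …, 0)`. As `a` and `b`
are coprime, modulo `p` some `c` makes `a - bc` a unit, and the row is then cyclic for `X`, so that
its centralizer has dimension `n`. Finally `b - X ^ (k + 1)` commutes with `X` and has trace `b`,
which is a unit modulo `p` unless `A` is scalar modulo `p`.
-/

/-- The row vector `ρ` is cyclic for `X`: no proper submodule contains `ρ` and is stable under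
right multiplication by `X`. -/
def IsRowCyclic {R ι : Type*} [CommRing R] [Fintype ι] (X : Matrix ι ι R) (ρ : ι → R) : Prop :=
  ∀ N : Submodule R (ι → R), ρ ∈ N → (∀ x ∈ N, x ᵥ* X ∈ N) → N = ⊤

/-- `A` is congruent to a scalar matrix modulo `p`. -/
def IsScalarMod {R ι : Type*} [CommRing R] [DecidableEq ι] (p : Ideal R) (A : Matrix ι ι R) :
    Prop :=
  ∃ c : R ⧸ p, A.map (Ideal.Quotient.mk p) = c • (1 : Matrix ι ι (R ⧸ p))

/-- `A` is not congruent to a scalar matrix modulo any maximal ideal. -/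
def IsNowhereScalar {R ι : Type*} [CommRing R] [DecidableEq ι] (A : Matrix ι ι R) : Prop :=
  ∀ p : Ideal R, p.IsMaximal → ¬ IsScalarMod p A

/-- `A` is a commutator `XY - YX` of trace-zero matrices such that, modulo every maximal ideal `p`,
the matrix `X` has a cyclic row vector, and such that some single matrix `W` commuting with `X` has
nonzero trace modulo every `p` for which `A` is not scalar. -/
def IsRegularCommutator {R ι : Type*} [CommRing R] [Fintype ι] [DecidableEq ι]
    (A : Matrix ι ι R) : Prop :=
  ∃ X Y W : Matrix ι ι R, X.trace = 0 ∧ Y.trace = 0 ∧ X * Y - Y * X = A ∧ Commute X W ∧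
    ∀ p : Ideal R, p.IsMaximal →
      (∃ ρ, IsRowCyclic (X.map (Ideal.Quotient.mk p)) ρ) ∧ (W.trace ∈ p → IsScalarMod p A)

/-- Transport of matrices along a change of basis `P` with inverse `Q`, where `P` and `Q` may be
indexed by different types on the two sides. -/
def conjAlgHom {R ι κ : Type*} [CommRing R] [Fintype ι] [DecidableEq ι] [Fintype κ] [DecidableEq κ]
    (P : Matrix ι κ R) (Q : Matrix κ ι R) (hPQ : P * Q = 1) (hQP : Q * P = 1) :
    Matrix ι ι R →ₐ[R] Matrix κ κ R where
  toFun X := Q * X * P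
  map_one' := by rw [Matrix.mul_one, hQP]
  map_mul' X Y := by
    simp only [Matrix.mul_assoc, ← Matrix.mul_assoc P Q, hPQ, Matrix.one_mul]
  map_zero' := by rw [Matrix.mul_zero, Matrix.zero_mul]
  map_add' X Y := by rw [Matrix.mul_add, Matrix.add_mul]
  commutes' r := by
    simp only [Algebra.algebraMap_eq_smul_one, Matrix.mul_smul, Matrix.smul_mul, Matrix.mul_one,
      hQP]

section Regularity

lemma IsRowCyclic.eq_zero_of_commute {R ι : Type*} [CommRing R] [Fintype ι]
    {X W : Matrix ι ι R} {ρ : ι → R} (hρ : IsRowCyclic X ρ) (hXW : Commute X W)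
    (h : ρ ᵥ* W = 0) : W = 0 := by
  have hker : LinearMap.ker (vecMulLinear W) = ⊤ := by
    refine hρ _ h fun x hx => ?_
    rw [LinearMap.mem_ker, vecMulLinear_apply] at hx ⊢
    rw [vecMul_vecMul, hXW.eq, ← vecMul_vecMul, hx, zero_vecMul]
  classical
  ext i j
  have hi : Pi.single i 1 ᵥ* W = 0 := LinearMap.congr_fun (LinearMap.ker_eq_top.1 hker) _
  simpa using congrFun hi j

lemma IsRowCyclic.finrank_glCent {R : Type*} [CommRing R] [Nontrivial R] {n : ℕ}
    {X : Matrix (Fin n) (Fin n) R} {ρ : Fin n → R} (hρ : IsRowCyclic X ρ) :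
    Module.finrank R (glCent X) = n := by
  let f : glCent X →ₗ[R] (Fin n → R) := vecMulBilin R R ρ ∘ₗ (glCent X).subtype
  have hinj : Function.Injective f := by
    rw [injective_iff_map_eq_zero]
    exact fun W hW => Subtype.ext (hρ.eq_zero_of_commute W.2 hW)
  have hrange : LinearMap.range f = ⊤ := by
    refine hρ _ ⟨⟨1, Commute.one_right X⟩, vecMul_one ρ⟩ ?_
    rintro _ ⟨⟨W, hW⟩, rfl⟩
    exact ⟨⟨W * X, Commute.mul_right hW (Commute.refl X)⟩, (vecMul_vecMul ρ W X).symm⟩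
  rw [(LinearEquiv.ofBijective f ⟨hinj, LinearMap.range_eq_top.1 hrange⟩).finrank_eq,
    Module.finrank_fin_fun]

lemma finrank_slCent_add_one {K : Type*} [Field K] {n : ℕ} {X W : Matrix (Fin n) (Fin n) K}
    (hXW : Commute X W) (hW : W.trace ≠ 0) :
    Module.finrank K (slCent X) + 1 = Module.finrank K (glCent X) := by
  let f : glCent X →ₗ[K] K := traceLinearMap (Fin n) K K ∘ₗ (glCent X).subtype
  have hf : LinearMap.range f = ⊤ := by
    refine LinearMap.range_eq_top.2 fun c => ⟨(c / W.trace) • ⟨W, hXW⟩, ?_⟩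
    simp [f, hW]
  have hker : (LinearMap.ker f).map (glCent X).subtype = slCent X := by
    ext Z
    constructor
    · rintro ⟨Z, hZ, rfl⟩
      exact ⟨hZ, Z.2⟩
    · rintro ⟨hZ, hXZ⟩
      exact ⟨⟨Z, hXZ⟩, hZ, rfl⟩
  rw [← hker, ← ((LinearMap.ker f).equivMapOfInjective _ (glCent X).subtype_injective).finrank_eq,
    ← f.finrank_range_add_finrank_ker, hf, finrank_top, Module.finrank_self, add_comm]

variable {R ι κ : Type*} [CommRing R]

lemma map_mul_map_eq_one {S : Type*} [CommRing S] [DecidableEq ι] [Fintype κ] {P : Matrix ι κ R}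
    {Q : Matrix κ ι R} (hPQ : P * Q = 1) (f : R →+* S) : P.map f * Q.map f = 1 := by
  rw [← Matrix.map_mul, hPQ, Matrix.map_one _ f.map_zero f.map_one]

lemma IsScalarMod.smul [DecidableEq ι] {p : Ideal R} {A : Matrix ι ι R} (hA : IsScalarMod p A)
    (r : R) : IsScalarMod p (r • A) := by
  obtain ⟨c, hc⟩ := hA
  refine ⟨Ideal.Quotient.mk p r * c, ?_⟩
  rw [mul_smul, ← hc]
  ext i j
  simp

lemma isScalarMod_smul_one_add_smul [DecidableEq ι] {p : Ideal R} {b : R} (hb : b ∈ p)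
    (a : R) (N : Matrix ι ι R) : IsScalarMod p (a • 1 + b • N) := by
  refine ⟨Ideal.Quotient.mk p a, ?_⟩
  ext i j
  by_cases h : i = j <;> simp [Ideal.Quotient.eq_zero_iff_mem.2 hb, h]

variable [Fintype ι] [DecidableEq ι] [Fintype κ] [DecidableEq κ]

section Conj

variable {P : Matrix ι κ R} {Q : Matrix κ ι R} (hPQ : P * Q = 1) (hQP : Q * P = 1)

lemma conjAlgHom_apply (X : Matrix ι ι R) : conjAlgHom P Q hPQ hQP X = Q * X * P := rfl

lemma trace_conjAlgHom (X : Matrix ι ι R) : (conjAlgHom P Q hPQ hQP X).trace = X.trace := by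
  rw [conjAlgHom_apply, trace_mul_comm, ← Matrix.mul_assoc, hPQ, Matrix.one_mul]

lemma conjAlgHom_conjAlgHom_symm (X : Matrix ι ι R) :
    conjAlgHom Q P hQP hPQ (conjAlgHom P Q hPQ hQP X) = X := by
  simp only [conjAlgHom_apply, Matrix.mul_assoc, hPQ, Matrix.mul_one]
  rw [← Matrix.mul_assoc, hPQ, Matrix.one_mul]

lemma map_conjAlgHom {S : Type*} [CommRing S] (f : R →+* S) (X : Matrix ι ι R) :
    (conjAlgHom P Q hPQ hQP X).map f = conjAlgHom (P.map f) (Q.map f)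
      (map_mul_map_eq_one hPQ f) (map_mul_map_eq_one hQP f) (X.map f) := by
  simp only [conjAlgHom_apply, Matrix.map_mul]

lemma IsRowCyclic.conj {X : Matrix ι ι R} {ρ : ι → R} (hρ : IsRowCyclic X ρ) :
    IsRowCyclic (conjAlgHom P Q hPQ hQP X) (ρ ᵥ* P) := by
  intro N hρN hN
  have hcomap : N.comap (vecMulLinear P) = ⊤ := by
    refine hρ _ hρN fun x hx => ?_
    have hxX : x ᵥ* P ᵥ* (Q * X * P) = x ᵥ* X ᵥ* P := by
      rw [vecMul_vecMul, vecMul_vecMul, ← Matrix.mul_assoc, ← Matrix.mul_assoc, hPQ,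
        Matrix.one_mul]
    have hmem : x ᵥ* P ᵥ* (Q * X * P) ∈ N := hN _ hx
    rwa [hxX] at hmem
  refine (Submodule.eq_top_iff').2 fun y => ?_
  have hy : y ᵥ* Q ∈ N.comap (vecMulLinear P) := hcomap ▸ Submodule.mem_top
  rwa [Submodule.mem_comap, vecMulLinear_apply, vecMul_vecMul, hQP, vecMul_one] at hy

lemma IsScalarMod.conj {p : Ideal R} {A : Matrix ι ι R} (hA : IsScalarMod p A) :
    IsScalarMod p (conjAlgHom P Q hPQ hQP A) := by
  obtain ⟨c, hc⟩ := hA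
  exact ⟨c, by rw [map_conjAlgHom, hc, map_smul, map_one]⟩

lemma IsRegularCommutator.conj {A : Matrix ι ι R} (hA : IsRegularCommutator A) :
    IsRegularCommutator (conjAlgHom P Q hPQ hQP A) := by
  obtain ⟨X, Y, W, hX, hY, rfl, hXW, hp⟩ := hA
  refine ⟨conjAlgHom P Q hPQ hQP X, conjAlgHom P Q hPQ hQP Y, conjAlgHom P Q hPQ hQP W, ?_, ?_,
    ?_, hXW.map _, fun p hpm => ⟨?_, fun hW => ?_⟩⟩
  · rw [trace_conjAlgHom, hX]
  · rw [trace_conjAlgHom, hY]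
  · rw [map_sub, map_mul, map_mul]
  · obtain ⟨ρ, hρ⟩ := (hp p hpm).1
    rw [map_conjAlgHom]
    exact ⟨_, hρ.conj _ _⟩
  · rw [trace_conjAlgHom] at hW
    exact ((hp p hpm).2 hW).conj hPQ hQP

end Conj

lemma IsRegularCommutator.smul {A : Matrix ι ι R} (hA : IsRegularCommutator A) (r : R) :
    IsRegularCommutator (r • A) := by
  obtain ⟨X, Y, W, hX, hY, rfl, hXW, hp⟩ := hA
  refine ⟨X, r • Y, W, hX, ?_, ?_, hXW, fun p hpm => ⟨(hp p hpm).1, fun hW => ?_⟩⟩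
  · rw [trace_smul, hY, smul_zero]
  · rw [Matrix.mul_smul, Matrix.smul_mul, smul_sub]
  · exact ((hp p hpm).2 hW).smul r

end Regularity

/-- The companion matrix of `x ^ (k + 1) - b`: ones on the superdiagonal and `b` in the lower left
corner. -/
def twistedShift {R : Type*} [CommRing R] (k : ℕ) (b : R) :
    Matrix (Fin (k + 1)) (Fin (k + 1)) R :=
  Matrix.of fun i j => (Fin.snoc (fun i' : Fin k => if j = i'.succ then 1 else 0)
    (if j = 0 then b else 0) : Fin (k + 1) → R) i

section TwistedShift

lemma trace_mul_commutator {R n : Type*} [CommRing R] [Fintype n] {W X : Matrix n n R}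
    (h : Commute W X) (Z : Matrix n n R) : (W * (X * Z - Z * X)).trace = 0 := by
  rw [Matrix.mul_sub, trace_sub, ← Matrix.mul_assoc, ← Matrix.mul_assoc, trace_mul_comm (W * Z),
    ← Matrix.mul_assoc, h.eq, sub_self]

variable {R : Type*} [CommRing R] {k : ℕ} (b : R)

lemma twistedShift_castSucc (i : Fin k) (j : Fin (k + 1)) :
    twistedShift k b i.castSucc j = if j = i.succ then 1 else 0 := by
  simp [twistedShift]

lemma twistedShift_last (j : Fin (k + 1)) :
    twistedShift k b (Fin.last k) j = if j = 0 then b else 0 := by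
  simp [twistedShift]

lemma twistedShift_map {S : Type*} [CommRing S] (f : R →+* S) :
    (twistedShift k b).map f = twistedShift k (f b) := by
  ext i j
  induction i using Fin.lastCases with
  | last => simp [twistedShift_last, apply_ite f]
  | cast i => simp [twistedShift_castSucc, apply_ite f]

lemma twistedShift_mul_castSucc {ι : Type*} (Z : Matrix (Fin (k + 1)) ι R) (i : Fin k) (j : ι) :
    (twistedShift k b * Z) i.castSucc j = Z i.succ j := by
  simp [Matrix.mul_apply, twistedShift_castSucc]

lemma twistedShift_mul_last {ι : Type*} (Z : Matrix (Fin (k + 1)) ι R) (j : ι) :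
    (twistedShift k b * Z) (Fin.last k) j = b * Z 0 j := by
  simp [Matrix.mul_apply, twistedShift_last]

lemma mul_twistedShift_succ {ι : Type*} (Z : Matrix ι (Fin (k + 1)) R) (i : ι) (j : Fin k) :
    (Z * twistedShift k b) i j.succ = Z i j.castSucc := by
  simp [Matrix.mul_apply, Fin.sum_univ_castSucc, twistedShift_castSucc, twistedShift_last]

lemma twistedShift_pow_mul_zero {ι : Type*} (Z : Matrix (Fin (k + 1)) ι R) (s : Fin (k + 1))
    (j : ι) : (twistedShift k b ^ (s : ℕ) * Z) 0 j = Z s j := by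
  induction s using Fin.induction generalizing Z with
  | zero => rw [Fin.val_zero, pow_zero, Matrix.one_mul]
  | succ s ih =>
    rw [Fin.val_succ, pow_succ, Matrix.mul_assoc, ← Fin.val_castSucc, ih,
      twistedShift_mul_castSucc]

lemma twistedShift_pow_zero (s j : Fin (k + 1)) :
    (twistedShift k b ^ (s : ℕ)) 0 j = if s = j then 1 else 0 := by
  rw [← Matrix.mul_one (_ ^ _), twistedShift_pow_mul_zero, Matrix.one_apply]

lemma twistedShift_pow_succ_last (s j : Fin (k + 1)) :
    (twistedShift k b ^ (s + 1 : ℕ)) (Fin.last k) j = if s = j then b else 0 := by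
  rw [pow_succ', twistedShift_mul_last, twistedShift_pow_zero, mul_ite, mul_one, mul_zero]

lemma twistedShift_pow_card : twistedShift k b ^ (k + 1) = b • 1 := by
  ext i j
  calc (twistedShift k b ^ (k + 1)) i j
    _ = (twistedShift k b ^ (i : ℕ) * twistedShift k b ^ (k + 1)) 0 j :=
        (twistedShift_pow_mul_zero ..).symm
    _ = (twistedShift k b ^ k * (twistedShift k b * twistedShift k b ^ (i : ℕ))) 0 j := by
        rw [(Commute.pow_pow_self _ _ _).eq, pow_succ, Matrix.mul_assoc]
    _ = (twistedShift k b * twistedShift k b ^ (i : ℕ)) (Fin.last k) j :=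
        twistedShift_pow_mul_zero b _ (Fin.last k) j
    _ = (b • 1 : Matrix _ _ R) i j := by
        rw [twistedShift_mul_last, twistedShift_pow_zero, Matrix.smul_apply, one_apply, smul_eq_mul]

lemma twistedShift_pow_trace {s : ℕ} (hs₀ : s ≠ 0) (hs : s ≤ k) :
    (twistedShift k b ^ s).trace = 0 := by
  refine Finset.sum_eq_zero fun i _ => ?_
  rw [diag_apply, ← twistedShift_pow_mul_zero b (_ ^ _) i i, ← pow_add]
  rcases lt_or_ge (i + s) (k + 1) with h | h
  · rw [twistedShift_pow_zero b ⟨i + s, h⟩ i, if_neg fun h' => hs₀ ?_]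
    simpa using Fin.val_eq_of_eq h'
  · obtain ⟨t, ht⟩ := Nat.exists_eq_add_of_le h
    have hti : t < i := by omega
    rw [ht, pow_add, twistedShift_pow_card, Matrix.smul_mul, Matrix.one_mul, Matrix.smul_apply,
      twistedShift_pow_zero b ⟨t, hti.trans i.2⟩ i, if_neg fun h' => hti.ne (Fin.val_eq_of_eq h'),
      smul_zero]

lemma exists_twistedShift_mulVec_eq {t : Fin (k + 1) → R} (ht : b ∣ t (Fin.last k)) :
    ∃ v, twistedShift k b *ᵥ v = t := by
  obtain ⟨c, hc⟩ := ht
  refine ⟨Fin.cons c fun i => t i.castSucc, funext fun i => ?_⟩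
  induction i using Fin.lastCases with
  | last => simp [mulVec, dotProduct, twistedShift_last, hc]
  | cast i => simp [mulVec, dotProduct, twistedShift_castSucc]

lemma eq_zero_of_trace_twistedShift_pow_mul {D : Matrix (Fin (k + 1)) (Fin (k + 1)) R}
    (hD : ∀ i (j : Fin k), D i j.succ = 0)
    (htr : ∀ s : Fin (k + 1), (twistedShift k b ^ (s : ℕ) * D).trace = 0) : D = 0 := by
  ext i j
  induction j using Fin.cases with
  | zero =>
    have hi := htr i
    rw [trace, Fin.sum_univ_succ, Finset.sum_eq_zero fun j _ => ?_, add_zero, diag_apply,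
      twistedShift_pow_mul_zero] at hi
    · exact hi
    · simp [Matrix.mul_apply, hD]
  | succ j => exact hD i j

lemma exists_commutator_twistedShift (C : Matrix (Fin (k + 1)) (Fin (k + 1)) R)
    (hC : ∀ s : Fin (k + 1), (twistedShift k b ^ (s : ℕ) * C).trace = 0) :
    ∃ Z, twistedShift k b * Z - Z * twistedShift k b = C := by
  set M := twistedShift k b with hM
  let z : Fin (k + 1) → Fin (k + 1) → R :=
    Fin.reverseInduction 0 fun j x => M *ᵥ x - fun i => C i j.succ
  have hz (j : Fin k) : z j.castSucc = M *ᵥ z j.succ - fun i => C i j.succ :=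
    Fin.reverseInduction_castSucc ..
  let Z : Matrix (Fin (k + 1)) (Fin (k + 1)) R := Matrix.of fun i j => z j i
  refine ⟨Z, sub_eq_zero.1 (eq_zero_of_trace_twistedShift_pow_mul b (fun i j => ?_) fun s => ?_)⟩
  · have hMZ : (M * Z) i j.succ = (M *ᵥ z j.succ) i := rfl
    simp only [Matrix.sub_apply, hMZ, hM ▸ mul_twistedShift_succ b Z, Z, of_apply, hz, Pi.sub_apply]
    ring
  · rw [mul_sub, trace_sub, hC, trace_mul_commutator (Commute.pow_self M s), sub_zero]

end TwistedShift

/-- The matrix obtained from `M` by adding a zero row on top and the column `u` on the left. -/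
def borderedMatrix {R ι : Type*} [CommRing R] (u : ι → R) (M : Matrix ι ι R) :
    Matrix (Unit ⊕ ι) (Unit ⊕ ι) R :=
  fromBlocks 0 0 (replicateCol Unit u) M

section BorderedMatrix

variable {R ι : Type*} [CommRing R]

lemma borderedMatrix_map {S : Type*} [CommRing S] (f : R →+* S) (u : ι → R) (M : Matrix ι ι R) :
    (borderedMatrix u M).map f = borderedMatrix (f ∘ u) (M.map f) := by
  ext (i | i) (j | j) <;> simp [borderedMatrix]

variable [Fintype ι]

lemma trace_borderedMatrix (u : ι → R) (M : Matrix ι ι R) :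
    (borderedMatrix u M).trace = M.trace := by
  simp [borderedMatrix, trace]

lemma vecMul_borderedMatrix (c : R) (x u : ι → R) (M : Matrix ι ι R) :
    Sum.elim (fun _ => c) x ᵥ* borderedMatrix u M = Sum.elim (fun _ => x ⬝ᵥ u) (x ᵥ* M) := by
  ext (j | j) <;> simp [borderedMatrix, vecMul, dotProduct]

lemma borderedMatrix_pow_succ [DecidableEq ι] (u : ι → R) (M : Matrix ι ι R) (s : ℕ) :
    borderedMatrix u M ^ (s + 1) = borderedMatrix (M ^ s *ᵥ u) (M ^ (s + 1)) := by
  induction s with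
  | zero => simp
  | succ s ih =>
    rw [pow_succ', ih, borderedMatrix, borderedMatrix, fromBlocks_multiply, borderedMatrix,
      ← pow_succ', pow_succ' M s, ← mulVec_mulVec, replicateCol_mulVec M]
    simp

lemma borderedMatrix_commutator (u v y : ι → R) (z : R) (M Z : Matrix ι ι R) :
    borderedMatrix u M * fromBlocks (z • 1) (replicateRow Unit y) (replicateCol Unit v) Z -
      fromBlocks (z • 1) (replicateRow Unit y) (replicateCol Unit v) Z * borderedMatrix u M =
    fromBlocks (-(y ⬝ᵥ u) • 1) (replicateRow Unit (-(y ᵥ* M)))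
      (replicateCol Unit (z • u + M *ᵥ v - Z *ᵥ u)) (vecMulVec u y + (M * Z - Z * M)) := by
  rw [borderedMatrix, fromBlocks_multiply, fromBlocks_multiply]
  ext (i | i) (j | j)
  · simp [Matrix.mul_apply, dotProduct]
  · simp [Matrix.mul_apply, vecMul, dotProduct]
  · simp [Matrix.mul_apply, mulVec, dotProduct, mul_comm z]
  · simp [Matrix.mul_apply, vecMulVec_apply, add_sub_assoc]

end BorderedMatrix

section BorderedShift

variable {R : Type*} [CommRing R] {k : ℕ} {a b : R} {u : Fin (k + 1) → R}

lemma single_castSucc_vecMul_twistedShift (b : R) (i : Fin k) :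
    Pi.single i.castSucc 1 ᵥ* twistedShift k b = Pi.single i.succ 1 := by
  ext j
  simp [twistedShift_castSucc, Pi.single_apply]

lemma single_last_vecMul_twistedShift (b : R) :
    Pi.single (Fin.last k) 1 ᵥ* twistedShift k b = Pi.single 0 b := by
  ext j
  simp [twistedShift_last, Pi.single_apply]

-- Iterating the matrix carries the given row to `(u_k, b • e₀)`, and subtracting `b` times the
-- given row leaves the unit multiple `(u_k - b * c, 0)` of the first basis row.
lemma isRowCyclic_borderedMatrix_twistedShift {c : R} (hc : IsUnit (u (Fin.last k) - b * c)) :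
    IsRowCyclic (borderedMatrix u (twistedShift k b)) (Sum.elim (fun _ => c) (Pi.single 0 1)) := by
  intro N hρ hN
  have hrow (i : Fin (k + 1)) : ∃ x, Sum.elim (fun _ => x) (Pi.single i 1) ∈ N := by
    induction i using Fin.induction with
    | zero => exact ⟨c, hρ⟩
    | succ i ih =>
      obtain ⟨x, hx⟩ := ih
      have hx' := hN _ hx
      rw [vecMul_borderedMatrix, single_castSucc_vecMul_twistedShift] at hx'
      exact ⟨_, hx'⟩
  have hleft (x : R) : Sum.elim (fun _ => x) 0 ∈ N := by
    obtain ⟨y, hy⟩ := hrow (Fin.last k)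
    have hy' := hN _ hy
    rw [vecMul_borderedMatrix, single_last_vecMul_twistedShift, single_one_dotProduct] at hy'
    obtain ⟨ε, hε⟩ := hc
    convert N.smul_mem (x * ↑ε⁻¹) (N.sub_mem hy' (N.smul_mem b hρ)) using 1
    ext (j | j)
    · simp [← hε]
    · simp [Pi.single_apply]
  rw [eq_top_iff, ← (Pi.basisFun R (Unit ⊕ Fin (k + 1))).span_eq, Submodule.span_le]
  rintro _ ⟨i | i, rfl⟩
  · convert! hleft 1
    ext (j | j) <;> simp
  · obtain ⟨x, hx⟩ := hrow i
    convert! N.sub_mem hx (hleft x)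
    ext (j | j) <;> simp [Pi.single_apply]

lemma exists_isRowCyclic_borderedMatrix_twistedShift {K : Type*} [Field K] {b : K}
    {u : Fin (k + 1) → K} (h : IsCoprime (u (Fin.last k)) b) :
    ∃ ρ, IsRowCyclic (borderedMatrix u (twistedShift k b)) ρ := by
  obtain ⟨c, hc⟩ : ∃ c : K, u (Fin.last k) - b * c ≠ 0 := by
    by_contra! hzero
    have hu : u (Fin.last k) = 0 := by simpa using hzero 0
    have hb : b = 0 := by simpa [hu] using hzero 1
    exact not_isCoprime_zero_zero (hb ▸ hu ▸ h)
  exact ⟨_, isRowCyclic_borderedMatrix_twistedShift hc.isUnit⟩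

lemma exists_commutator_twistedShift_eq_add_vecMulVec {B : Matrix (Fin (k + 1)) (Fin (k + 1)) R}
    (htr : (k + 2) * a + b * B.trace = 0) :
    ∃ u Z, u (Fin.last k) = a ∧ twistedShift k b * Z - Z * twistedShift k b =
      a • 1 + b • B + vecMulVec u (Pi.single (Fin.last k) 1) := by
  set M := twistedShift k b with hM
  let u : Fin (k + 1) → R := Fin.snoc (fun s : Fin k => -(M ^ (s + 1 : ℕ) * B).trace) a
  have hlast : u (Fin.last k) = a := by simp only [u, Fin.snoc_last]
  have hcast (s : Fin k) : u s.castSucc = -(M ^ (s + 1 : ℕ) * B).trace := by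
    simp only [u, Fin.snoc_castSucc]
  suffices htr : ∀ s : Fin (k + 1), (M ^ (s : ℕ) * (a • 1 + b • B +
      vecMulVec u (Pi.single (Fin.last k) 1))).trace = 0 by
    obtain ⟨Z, hZ⟩ := exists_commutator_twistedShift b _ htr
    exact ⟨u, Z, hlast, hZ⟩
  intro s
  have hexp : (M ^ (s : ℕ) * (a • 1 + b • B + vecMulVec u (Pi.single (Fin.last k) 1))).trace =
      a * (M ^ (s : ℕ)).trace + b * (M ^ (s : ℕ) * B).trace +
        (M ^ (s : ℕ) *ᵥ u) (Fin.last k) := by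
    simp only [Matrix.mul_add, trace_add, Matrix.mul_smul, Matrix.mul_one, trace_smul, smul_eq_mul,
      mul_vecMulVec, trace_vecMulVec, dotProduct_single_one]
  rw [hexp]
  induction s using Fin.cases with
  | zero =>
    simp only [Fin.val_zero, pow_zero, trace_one, Fintype.card_fin, Matrix.one_mul, one_mulVec,
      hlast, Nat.cast_add, Nat.cast_one]
    linear_combination htr
  | succ s =>
    have hrow := twistedShift_pow_succ_last b s.castSucc
    rw [Fin.val_castSucc, ← hM] at hrow
    have hpow : (M ^ (s + 1 : ℕ) *ᵥ u) (Fin.last k) = b * u s.castSucc := by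
      simp [mulVec, dotProduct, hrow]
    rw [Fin.val_succ, hpow, hcast, twistedShift_pow_trace b (Nat.succ_ne_zero _) s.2]
    ring

lemma exists_borderedMatrix_commutator {B : Matrix (Fin (k + 1)) (Fin (k + 1)) R}
    (htr : (k + 2) * a + b * B.trace = 0) (d : Fin (k + 1) → R) :
    ∃ u Y, u (Fin.last k) = a ∧ Y.trace = 0 ∧
      borderedMatrix u (twistedShift k b) * Y - Y * borderedMatrix u (twistedShift k b) =
        a • 1 + b • fromBlocks 0 (replicateRow Unit (Pi.single 0 1)) (replicateCol Unit d) B := by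
  obtain ⟨u, Z, hu, hZ⟩ := exists_commutator_twistedShift_eq_add_vecMulVec htr
  set M := twistedShift k b
  have hlast : a * Z.trace + b * (Z * B).trace + (Z *ᵥ u) (Fin.last k) = 0 := by
    have h := trace_mul_commutator (Commute.refl Z) M
    rw [← neg_sub, hZ, Matrix.mul_neg, trace_neg, neg_eq_zero] at h
    simpa [Matrix.mul_add, mul_vecMulVec, trace_vecMulVec] using h
  obtain ⟨v, hv⟩ : ∃ v, M *ᵥ v = b • d + Z *ᵥ u + Z.trace • u := by
    refine exists_twistedShift_mulVec_eq b ⟨d (Fin.last k) - (Z * B).trace, ?_⟩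
    simp only [Pi.add_apply, Pi.smul_apply, smul_eq_mul, hu]
    linear_combination hlast
  refine ⟨u, fromBlocks (-Z.trace • 1) (replicateRow Unit (-Pi.single (Fin.last k) 1))
    (replicateCol Unit v) Z, hu, ?_, ?_⟩
  · simp [trace]
  · rw [borderedMatrix_commutator, hZ, hv, neg_vecMul, single_last_vecMul_twistedShift,
      ← fromBlocks_one, fromBlocks_smul, fromBlocks_smul, fromBlocks_add]
    congr 1
    · simp [hu]
    · ext i j
      simp [Pi.single_apply]
    · ext i j
      simp
    · rw [vecMulVec_neg]
      abel

lemma isRegularCommutator_fromBlocks (hk : k ≠ 0) (hab : IsCoprime a b)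
    {B : Matrix (Fin (k + 1)) (Fin (k + 1)) R} (htr : (k + 2) * a + b * B.trace = 0)
    (d : Fin (k + 1) → R) :
    IsRegularCommutator (a • 1 + b • fromBlocks 0 (replicateRow Unit (Pi.single 0 1))
      (replicateCol Unit d) B) := by
  obtain ⟨u, Y, hu, hY, hXY⟩ := exists_borderedMatrix_commutator htr d
  set M := twistedShift k b
  refine ⟨borderedMatrix u M, Y, b • 1 - borderedMatrix u M ^ (k + 1), ?_, hY, hXY, ?_,
    fun p hp => ⟨?_, fun hb => isScalarMod_smul_one_add_smul ?_ a _⟩⟩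
  · rw [trace_borderedMatrix, ← pow_one M, twistedShift_pow_trace b one_ne_zero
      (Nat.one_le_iff_ne_zero.2 hk)]
  · exact ((Commute.one_right _).smul_right b).sub_right (Commute.self_pow _ _)
  · let _ := Ideal.Quotient.field p
    rw [borderedMatrix_map, twistedShift_map]
    refine exists_isRowCyclic_borderedMatrix_twistedShift ?_
    rw [Function.comp_apply, hu]
    exact hab.map (Ideal.Quotient.mk p)
  · have htrace : (b • 1 - borderedMatrix u M ^ (k + 1)).trace = b := by
      rw [trace_sub, borderedMatrix_pow_succ, trace_borderedMatrix, twistedShift_pow_card,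
        trace_smul, trace_smul, trace_one, trace_one]
      simp only [Fintype.card_sum, Fintype.card_unit, Fintype.card_fin, Nat.cast_add, Nat.cast_one,
        smul_eq_mul]
      ring
    rwa [htrace] at hb

lemma isRegularCommutator_of_row_eq_single (hk : k ≠ 0) (hab : IsCoprime a b)
    {N : Matrix (Unit ⊕ Fin (k + 1)) (Unit ⊕ Fin (k + 1)) R}
    (hN : ∀ j, N (Sum.inl ()) j = if j = Sum.inr 0 then 1 else 0)
    (htr : (a • 1 + b • N).trace = 0) : IsRegularCommutator (a • 1 + b • N) := by
  have hblocks : N = fromBlocks 0 (replicateRow Unit (Pi.single 0 1))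
      (replicateCol Unit fun i => N (Sum.inr i) (Sum.inl ())) N.toBlocks₂₂ := by
    ext (i | i) (j | j) <;> simp [hN, Pi.single_apply, toBlocks₂₂]
  have htrace : N.trace = N.toBlocks₂₂.trace := by
    simp [trace, Fintype.sum_sum_type, hN, toBlocks₂₂]
  rw [trace_add, trace_smul, trace_smul, htrace, trace_one] at htr
  rw [hblocks]
  refine isRegularCommutator_fromBlocks hk hab ?_ _
  simp only [Fintype.card_sum, Fintype.card_unit, Fintype.card_fin, Nat.cast_add, Nat.cast_one,
    smul_eq_mul] at htr
  linear_combination htr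

end BorderedShift

/-- The value `w ⬝ᵥ A *ᵥ v` at the orthogonal pair `(w, v)` is minimal for divisibility among the
values of `A` at orthogonal pairs. -/
def IsDvdMinimalPair {R κ : Type*} [CommRing R] [Fintype κ] (A : Matrix κ κ R) (w v : κ → R) :
    Prop :=
  w ⬝ᵥ v = 0 ∧ ∀ w' v', w' ⬝ᵥ v' = 0 → w' ⬝ᵥ A *ᵥ v' ∣ w ⬝ᵥ A *ᵥ v →
    w ⬝ᵥ A *ᵥ v ∣ w' ⬝ᵥ A *ᵥ v'

section OrthogonalValues

lemma exists_eq_smul_of_mul_eq_mul {K κ : Type*} [Field K] {x y : κ → K} (hx : x ≠ 0)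
    (h : ∀ i j, x i * y j = x j * y i) : ∃ μ : K, y = μ • x := by
  obtain ⟨i, hi⟩ := Function.ne_iff.1 hx
  refine ⟨y i / x i, funext fun j => ?_⟩
  rw [Pi.smul_apply, smul_eq_mul, div_mul_eq_mul_div, eq_div_iff hi]
  linear_combination h i j

lemma map_eq_smul_of_map_add_eq_smul {K V : Type*} [Field K] [AddCommGroup V] [Module K V]
    (f : V →ₗ[K] V) {w x : V} {l m n : K} (hw : w ≠ 0) (hfw : f w = l • w) (hfx : f x = m • x)
    (hfxw : f (x + w) = n • (x + w)) : f x = l • x := by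
  have hrel : (m - n) • x = (n - l) • w := by
    rw [map_add, hfx, hfw, smul_add] at hfxw
    rw [sub_smul, sub_smul, sub_eq_sub_iff_add_eq_add, hfxw, add_comm]
  by_cases hmn : m = n
  · rw [hmn, sub_self, zero_smul, eq_comm, smul_eq_zero, or_iff_left hw, sub_eq_zero] at hrel
    rw [hfx, hmn, hrel]
  · obtain ⟨c, rfl⟩ : ∃ c : K, x = c • w :=
      ⟨(m - n)⁻¹ * (n - l), by rw [mul_smul, ← hrel, inv_smul_smul₀ (sub_ne_zero.2 hmn)]⟩
    rw [map_smul, hfw, smul_comm]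

variable {R κ : Type*} [CommRing R] [Fintype κ] {A : Matrix κ κ R} {w v : κ → R}

lemma exists_isDvdMinimalPair [IsDomain R] [IsPrincipalIdealRing R] (A : Matrix κ κ R) :
    ∃ w v, IsDvdMinimalPair A w v := by
  let S : Set R := {g | ∃ w v : κ → R, w ⬝ᵥ v = 0 ∧ w ⬝ᵥ A *ᵥ v = g}
  have hS : S.Nonempty := ⟨0, 0, 0, zero_dotProduct 0, zero_dotProduct _⟩
  obtain ⟨_, ⟨w, v, hwv, rfl⟩, hmin⟩ := wellFounded_dvdNotUnit.has_min S hS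
  refine ⟨w, v, hwv, fun w' v' hwv' hdvd => by_contra fun hndvd => ?_⟩
  exact hmin _ ⟨w', v', hwv', rfl⟩ (dvd_and_not_dvd_iff.1 ⟨hdvd, hndvd⟩)

lemma exists_dotProduct_mulVec_dvd_dvd [IsBezout R] {v v' : κ → R} (hv : w ⬝ᵥ v = 0)
    (hv' : w ⬝ᵥ v' = 0) : ∃ v'', w ⬝ᵥ v'' = 0 ∧ w ⬝ᵥ A *ᵥ v'' ∣ w ⬝ᵥ A *ᵥ v ∧
      w ⬝ᵥ A *ᵥ v'' ∣ w ⬝ᵥ A *ᵥ v' := by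
  obtain ⟨x, y, hxy⟩ := IsBezout.gcd_eq_sum (w ⬝ᵥ A *ᵥ v) (w ⬝ᵥ A *ᵥ v')
  have hval : w ⬝ᵥ A *ᵥ (x • v + y • v') = IsBezout.gcd (w ⬝ᵥ A *ᵥ v) (w ⬝ᵥ A *ᵥ v') := by
    rw [← hxy]
    simp only [mulVec_add, mulVec_smul, dotProduct_add, dotProduct_smul, smul_eq_mul]
  refine ⟨x • v + y • v', ?_, hval ▸ IsBezout.gcd_dvd_left _ _, hval ▸ IsBezout.gcd_dvd_right _ _⟩
  rw [dotProduct_add, dotProduct_smul, dotProduct_smul, hv, hv', smul_zero, smul_zero, add_zero]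

lemma IsDvdMinimalPair.transpose (h : IsDvdMinimalPair A w v) : IsDvdMinimalPair Aᵀ v w := by
  refine ⟨dotProduct_comm v w ▸ h.1, fun w' v' hwv' hdvd => ?_⟩
  rw [dotProduct_transpose_mulVec] at hdvd ⊢
  rw [dotProduct_transpose_mulVec] at hdvd ⊢
  exact h.2 v' w' (dotProduct_comm w' v' ▸ hwv') hdvd

lemma IsDvdMinimalPair.dvd_right [IsBezout R] (h : IsDvdMinimalPair A w v) {v' : κ → R}
    (hv' : w ⬝ᵥ v' = 0) : w ⬝ᵥ A *ᵥ v ∣ w ⬝ᵥ A *ᵥ v' := by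
  obtain ⟨v'', hv'', hdvd, hdvd'⟩ := exists_dotProduct_mulVec_dvd_dvd h.1 hv'
  exact (h.2 w v'' hv'' hdvd).trans hdvd'

lemma IsDvdMinimalPair.dvd_left [IsBezout R] (h : IsDvdMinimalPair A w v) {w' : κ → R}
    (hw' : w' ⬝ᵥ v = 0) : w ⬝ᵥ A *ᵥ v ∣ w' ⬝ᵥ A *ᵥ v := by
  have hdvd := h.transpose.dvd_right (dotProduct_comm v w' ▸ hw')
  rwa [dotProduct_transpose_mulVec, dotProduct_transpose_mulVec] at hdvd

lemma IsDvdMinimalPair.of_eq (h : IsDvdMinimalPair A w v) {w' v' : κ → R} (hwv' : w' ⬝ᵥ v' = 0)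
    (heq : w' ⬝ᵥ A *ᵥ v' = w ⬝ᵥ A *ᵥ v) : IsDvdMinimalPair A w' v' :=
  ⟨hwv', heq ▸ h.2⟩

section Reduction

variable {K : Type*} [Field K] {φ : R →+* K}

-- A value at `w'` prime to `π` can be combined with the given value to one dividing the minimal
-- value strictly.
lemma IsDvdMinimalPair.map_eq_zero_of_dvd_mul [IsBezout R] (h : IsDvdMinimalPair A w v)
    (hφ : Function.Surjective φ) {π : R} (hπ : RingHom.ker φ = Ideal.span {π})
    (hg : φ (w ⬝ᵥ A *ᵥ v) = 0) {w' v' v'' : κ → R} (hv' : w' ⬝ᵥ v' = 0)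
    (hdvd : w' ⬝ᵥ A *ᵥ v' ∣ π * (w ⬝ᵥ A *ᵥ v)) (hv'' : w' ⬝ᵥ v'' = 0) :
    φ (w' ⬝ᵥ A *ᵥ v'') = 0 := by
  obtain ⟨x, hx, hxv', hxv''⟩ := exists_dotProduct_mulVec_dvd_dvd (A := A) hv' hv''
  by_contra hne
  have hφx : φ (w' ⬝ᵥ A *ᵥ x) ≠ 0 := fun h0 => hne (zero_dvd_iff.1 (h0 ▸ map_dvd φ hxv''))
  obtain ⟨y, hy⟩ := hφ (φ (w' ⬝ᵥ A *ᵥ x))⁻¹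
  have hker : 1 - y * (w' ⬝ᵥ A *ᵥ x) ∈ RingHom.ker φ := by
    rw [RingHom.mem_ker, map_sub, map_one, map_mul, hy, inv_mul_cancel₀ hφx, sub_self]
  rw [hπ, Ideal.mem_span_singleton'] at hker
  obtain ⟨z, hz⟩ := hker
  have hcop : IsCoprime (w' ⬝ᵥ A *ᵥ x) π := ⟨y, z, by rw [hz]; ring⟩
  have hxg := h.2 w' x hx (hcop.dvd_of_dvd_mul_left (hxv'.trans hdvd))
  exact hφx (zero_dvd_iff.1 (hg ▸ map_dvd φ hxg))

lemma exists_map_vecMul_eq_smul (h : ∀ v, w ⬝ᵥ v = 0 → φ (w ⬝ᵥ A *ᵥ v) = 0) :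
    ∃ μ : K, (φ ∘ w) ᵥ* A.map φ = μ • (φ ∘ w) := by
  classical
  by_cases hw : φ ∘ w = 0
  · exact ⟨0, by rw [hw, zero_vecMul, smul_zero]⟩
  have hmap : (φ ∘ w) ᵥ* A.map φ = φ ∘ (w ᵥ* A) := funext fun j => (RingHom.map_vecMul ..).symm
  rw [hmap]
  refine exists_eq_smul_of_mul_eq_mul hw fun i j => ?_
  have hkoszul := h (w i • Pi.single j 1 - w j • Pi.single i 1) (by
    simp [dotProduct_sub, mul_comm])
  rw [dotProduct_mulVec, dotProduct_sub, dotProduct_smul, dotProduct_smul, dotProduct_single_one,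
    dotProduct_single_one, map_sub, smul_eq_mul, smul_eq_mul, map_mul, map_mul] at hkoszul
  exact sub_eq_zero.1 hkoszul

lemma IsDvdMinimalPair.map_vecMul_eq_smul [IsPrincipalIdealRing R] (h : IsDvdMinimalPair A w v)
    (hφ : Function.Surjective φ) (hg : φ (w ⬝ᵥ A *ᵥ v) = 0) (hw : φ ∘ w ≠ 0) {l : K}
    (hl : (φ ∘ w) ᵥ* A.map φ = l • (φ ∘ w)) {w' : κ → R} (hw' : w' ⬝ᵥ v = 0) :
    (φ ∘ w') ᵥ* A.map φ = l • (φ ∘ w') := by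
  obtain ⟨π, hπ⟩ := (IsPrincipalIdealRing.principal (RingHom.ker φ)).principal
  have hφπ : φ π = 0 := by
    rw [← RingHom.mem_ker, hπ]
    exact Submodule.mem_span_singleton_self π
  obtain ⟨β, hβ⟩ := h.dvd_left hw'
  have hx₀ : (w' - β • w) ⬝ᵥ v = 0 := by rw [sub_dotProduct, smul_dotProduct, hw', h.1]; simp
  have hxA : (w' - β • w) ⬝ᵥ A *ᵥ v = 0 := by
    rw [sub_dotProduct, smul_dotProduct, hβ, smul_eq_mul]; ring
  have heigen (r : R) (hr : r ∣ π) : ∃ μ : K,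
      (φ ∘ (w' - β • w + r • w)) ᵥ* A.map φ = μ • (φ ∘ (w' - β • w + r • w)) := by
    refine exists_map_vecMul_eq_smul fun v'' => h.map_eq_zero_of_dvd_mul hφ hπ hg (v' := v) ?_ ?_
    · rw [add_dotProduct, smul_dotProduct, hx₀, h.1, smul_zero, add_zero]
    · rw [add_dotProduct, smul_dotProduct, hxA, zero_add, smul_eq_mul]
      exact mul_dvd_mul_right hr _
  have hcomp (r : R) : φ ∘ (w' - β • w + r • w) = φ ∘ (w' - β • w) + φ r • (φ ∘ w) := by
    ext; simp
  obtain ⟨μ, hμ⟩ := heigen π dvd_rfl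
  obtain ⟨ν, hν⟩ := heigen 1 (one_dvd π)
  rw [hcomp, hφπ, zero_smul, add_zero] at hμ
  rw [hcomp, map_one, one_smul] at hν
  have hx := map_eq_smul_of_map_add_eq_smul (vecMulLinear (A.map φ)) hw hl hμ hν
  have hw'x : φ ∘ w' = φ ∘ (w' - β • w) + φ β • (φ ∘ w) := by
    ext; simp
  rw [vecMulLinear_apply] at hx
  rw [hw'x, add_vecMul, smul_vecMul, hx, hl, smul_add, smul_comm]

lemma exists_dotProduct_eq_zero_map_ne_zero (hκ : 2 < Fintype.card κ)
    (hwv : w ⬝ᵥ v = 0) (hw : φ ∘ w ≠ 0) (hv : φ ∘ v ≠ 0) :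
    ∃ v' i j, w ⬝ᵥ v' = 0 ∧ φ (v' i * v j - v' j * v i) ≠ 0 := by
  classical
  obtain ⟨i, hi⟩ := Function.ne_iff.1 hw
  obtain ⟨l, hl, hli⟩ : ∃ l, φ (v l) ≠ 0 ∧ l ≠ i := by
    by_contra! hall
    have hvl (l) (hli : l ≠ i) : φ (v l) = 0 := by_contra fun hl => hli (hall l hl)
    have hsum : φ (w i) * φ (v i) = 0 := by
      rw [← map_zero φ, ← hwv, dotProduct, map_sum, Fintype.sum_eq_single i, map_mul]
      intro l hli
      rw [map_mul, hvl l hli, mul_zero]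
    refine hv (funext fun l => ?_)
    by_cases hli : l = i
    · exact hli ▸ (mul_eq_zero.1 hsum).resolve_left hi
    · exact hvl l hli
  obtain ⟨j, hji, hjl⟩ : ∃ j, j ≠ i ∧ j ≠ l := by
    have hcard : ({i, l} : Finset κ).card < Fintype.card κ := Finset.card_le_two.trans_lt hκ
    obtain ⟨j, hj⟩ := Finset.exists_mem_notMem_of_card_lt_card (t := Finset.univ) hcard
    exact ⟨j, by simpa [not_or] using hj⟩
  refine ⟨w i • Pi.single j 1 - w j • Pi.single i 1, j, l, ?_, ?_⟩
  · simp [dotProduct_sub, mul_comm]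
  · simpa [hji, hjl, hjl.symm, hli] using ⟨hi, hl⟩

lemma IsDvdMinimalPair.exists_dotProduct_map_ne_zero [IsBezout R] (h : IsDvdMinimalPair A w v)
    (hκ : 2 < Fintype.card κ) (hw : φ ∘ w ≠ 0) (hv : φ ∘ v ≠ 0) :
    ∃ v' s, IsDvdMinimalPair A w v' ∧ w ⬝ᵥ A *ᵥ v' = w ⬝ᵥ A *ᵥ v ∧ s ⬝ᵥ v' = 0 ∧
      φ (s ⬝ᵥ v) ≠ 0 := by
  classical
  obtain ⟨x, i, j, hwx, hxij⟩ := exists_dotProduct_eq_zero_map_ne_zero hκ h.1 hw hv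
  obtain ⟨γ, hγ⟩ := h.dvd_right hwx
  have hwv' : w ⬝ᵥ (x + (1 - γ) • v) = 0 := by
    rw [dotProduct_add, dotProduct_smul, hwx, h.1, smul_zero, add_zero]
  have hval : w ⬝ᵥ A *ᵥ (x + (1 - γ) • v) = w ⬝ᵥ A *ᵥ v := by
    rw [mulVec_add, mulVec_smul, dotProduct_add, dotProduct_smul, hγ, smul_eq_mul]
    ring
  generalize hv' : x + (1 - γ) • v = v' at hwv' hval
  refine ⟨v', v' i • Pi.single j 1 - v' j • Pi.single i 1, h.of_eq hwv' hval, hval, ?_, ?_⟩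
  · simp [sub_dotProduct, mul_comm]
  -- `v' - x` is a multiple of `v`, so `(v', v)` and `(x, v)` have the same minors.
  · convert hxij using 2
    simp only [← hv', sub_dotProduct, smul_dotProduct, single_one_dotProduct, Pi.add_apply,
      Pi.smul_apply, smul_eq_mul]
    ring

lemma IsDvdMinimalPair.exists_map_eq_smul_one [DecidableEq κ] [IsPrincipalIdealRing R]
    (h : IsDvdMinimalPair A w v) (hκ : 2 < Fintype.card κ) (hφ : Function.Surjective φ)
    (hg : φ (w ⬝ᵥ A *ᵥ v) = 0) (hw : φ ∘ w ≠ 0) (hv : φ ∘ v ≠ 0) : ∃ l : K, A.map φ = l • 1 := by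
  obtain ⟨l, hl⟩ : ∃ l : K, (φ ∘ w) ᵥ* A.map φ = l • (φ ∘ w) :=
    exists_map_vecMul_eq_smul fun v' hv' => zero_dvd_iff.1 (hg ▸ map_dvd φ (h.dvd_right hv'))
  obtain ⟨v', s, h', hval, hsv', hsv⟩ := h.exists_dotProduct_map_ne_zero hκ hw hv
  have hs : (φ ∘ s) ᵥ* A.map φ = l • (φ ∘ s) :=
    h'.map_vecMul_eq_smul hφ (hval ▸ hg) hw hl hsv'
  have hall (y : κ → R) : (φ ∘ y) ᵥ* A.map φ = l • (φ ∘ y) := by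
    have hy := h.map_vecMul_eq_smul hφ hg hw hl (w' := (s ⬝ᵥ v) • y - (y ⬝ᵥ v) • s) (by
      rw [sub_dotProduct, smul_dotProduct, smul_dotProduct, smul_eq_mul, smul_eq_mul, mul_comm,
        sub_self])
    have hcomp : φ ∘ ((s ⬝ᵥ v) • y - (y ⬝ᵥ v) • s) =
        φ (s ⬝ᵥ v) • (φ ∘ y) - φ (y ⬝ᵥ v) • (φ ∘ s) := by
      ext; simp
    rw [hcomp, sub_vecMul, smul_vecMul, smul_vecMul, hs, smul_sub, smul_comm l (φ (y ⬝ᵥ v)),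
      sub_left_inj, smul_comm l] at hy
    exact smul_right_injective _ hsv hy
  refine ⟨l, ?_⟩
  ext i j
  have hij := congrFun (hall (Pi.single i 1)) j
  have hsingle : φ ∘ Pi.single i 1 = Pi.single i 1 := by
    ext j; simp [Pi.single_apply, apply_ite φ]
  rw [hsingle, single_one_vecMul] at hij
  simpa [Pi.single_apply, Matrix.one_apply, eq_comm] using hij

lemma comp_ne_zero_of_span_eq_top {ι : Type*} {w : ι → R} (φ : R →+* K)
    (hw : Ideal.span (Set.range w) = ⊤) : φ ∘ w ≠ 0 := by
  intro h
  have hle : Ideal.span (Set.range w) ≤ RingHom.ker φ := by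
    rw [Ideal.span_le]
    rintro _ ⟨i, rfl⟩
    exact congrFun h i
  exact RingHom.ker_ne_top φ (top_le_iff.1 (hw ▸ hle))

end Reduction

lemma exists_eq_smul_span_eq_top {ι : Type*} [Nonempty ι] [IsDomain R] [IsPrincipalIdealRing R]
    (w : ι → R) : ∃ (c : R) (w₀ : ι → R), w = c • w₀ ∧ Ideal.span (Set.range w₀) = ⊤ := by
  obtain ⟨c, hc⟩ := (IsPrincipalIdealRing.principal (Ideal.span (Set.range w))).principal
  rw [Ideal.submodule_span_eq] at hc
  have hdvd (i) : c ∣ w i := by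
    rw [← Ideal.mem_span_singleton, ← hc]
    exact Ideal.subset_span ⟨i, rfl⟩
  by_cases hc₀ : c = 0
  · refine ⟨0, 1, ?_, ?_⟩
    · ext i
      simpa [hc₀] using hdvd i
    · rw [Ideal.eq_top_iff_one]
      exact Ideal.subset_span ⟨Classical.arbitrary ι, rfl⟩
  · choose w₀ hw₀ using hdvd
    refine ⟨c, w₀, funext hw₀, (Ideal.span_singleton_mul_right_inj hc₀).1 ?_⟩
    rw [Ideal.mul_top, Ideal.span_mul_span', Set.singleton_mul, ← Set.range_comp, ← hc]
    exact congrArg (Ideal.span ∘ Set.range) (funext hw₀).symm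

lemma exists_isDvdMinimalPair_span_eq_top [Nontrivial κ] [IsDomain R] [IsPrincipalIdealRing R]
    (A : Matrix κ κ R) : ∃ w v, IsDvdMinimalPair A w v ∧ Ideal.span (Set.range w) = ⊤ ∧
      Ideal.span (Set.range v) = ⊤ := by
  classical
  obtain ⟨w, v, h⟩ := exists_isDvdMinimalPair A
  by_cases hg : w ⬝ᵥ A *ᵥ v = 0
  · obtain ⟨i, j, hij⟩ := exists_pair_ne κ
    have hspan (i : κ) : Ideal.span (Set.range (Pi.single i (1 : R))) = ⊤ := by
      rw [Ideal.eq_top_iff_one]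
      exact Ideal.subset_span ⟨i, Pi.single_eq_same i 1⟩
    have horth : Pi.single i (1 : R) ⬝ᵥ Pi.single j 1 = 0 := by simp [hij]
    refine ⟨Pi.single i 1, Pi.single j 1, h.of_eq horth ?_, hspan i, hspan j⟩
    have hdvd := h.2 _ _ horth (hg ▸ dvd_zero _)
    rw [hg, zero_dvd_iff] at hdvd
    rw [hdvd, hg]
  · obtain ⟨c, w, rfl, hw⟩ := exists_eq_smul_span_eq_top w
    obtain ⟨d, v, rfl, hv⟩ := exists_eq_smul_span_eq_top v
    have hval : (c • w) ⬝ᵥ A *ᵥ (d • v) = c * d * (w ⬝ᵥ A *ᵥ v) := by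
      rw [mulVec_smul, dotProduct_smul, smul_dotProduct, smul_eq_mul, smul_eq_mul]
      ring
    have hcd : c * d ≠ 0 := fun h₀ => hg (by rw [hval, h₀, zero_mul])
    have hwv : w ⬝ᵥ v = 0 := by
      have hwv := h.1
      rw [dotProduct_smul, smul_dotProduct, smul_smul, smul_eq_mul, mul_comm d] at hwv
      exact (mul_eq_zero.1 hwv).resolve_left hcd
    have hdvd : w ⬝ᵥ A *ᵥ v ∣ (c • w) ⬝ᵥ A *ᵥ (d • v) := hval ▸ dvd_mul_left _ _
    exact ⟨w, v, ⟨hwv, fun w' v' hwv' hdvd' => hdvd.trans (h.2 w' v' hwv' (hdvd'.trans hdvd))⟩,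
      hw, hv⟩

lemma IsNowhereScalar.exists_dotProduct_mulVec_eq_one [DecidableEq κ] [IsDomain R]
    [IsPrincipalIdealRing R] (hA : IsNowhereScalar A) (hκ : 2 < Fintype.card κ) :
    ∃ w v, w ⬝ᵥ v = 0 ∧ w ⬝ᵥ A *ᵥ v = 1 := by
  have : Nontrivial κ := Fintype.one_lt_card_iff_nontrivial.1 (one_lt_two.trans hκ)
  obtain ⟨w, v, h, hw, hv⟩ := exists_isDvdMinimalPair_span_eq_top A
  have hunit : IsUnit (w ⬝ᵥ A *ᵥ v) := by
    by_contra hg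
    obtain ⟨p, hp, hgp⟩ := exists_max_ideal_of_mem_nonunits hg
    let _ := Ideal.Quotient.field p
    exact hA p hp (h.exists_map_eq_smul_one hκ Ideal.Quotient.mk_surjective
      (Ideal.Quotient.eq_zero_iff_mem.2 hgp) (comp_ne_zero_of_span_eq_top _ hw)
      (comp_ne_zero_of_span_eq_top _ hv))
  obtain ⟨c, hc⟩ := hunit.exists_left_inv
  refine ⟨c • w, v, ?_, ?_⟩
  · rw [smul_dotProduct, h.1, smul_zero]
  · rw [smul_dotProduct, smul_eq_mul, hc]

end OrthogonalValues

section NormalForm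

lemma finrank_ker_mulVecLin_add_card {R m κ : Type*} [CommRing R] [IsDomain R] [Fintype m]
    [DecidableEq m] [Fintype κ] {U : Matrix m κ R} {V : Matrix κ m R} (hUV : U * V = 1) :
    Module.finrank R (LinearMap.ker (mulVecLin U)) + Fintype.card m = Fintype.card κ := by
  have hsurj : Function.Surjective (mulVecLin U) := fun y => ⟨V *ᵥ y, by
    rw [mulVecLin_apply, mulVec_mulVec, hUV, one_mulVec]⟩
  have h := Submodule.finrank_quotient_add_finrank (LinearMap.ker (mulVecLin U))
  rwa [((mulVecLin U).quotKerEquivOfSurjective hsurj).finrank_eq,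
    Module.finrank_fintype_fun_eq_card, Module.finrank_fintype_fun_eq_card, add_comm] at h

lemma exists_fromRows_mul_fromCols_eq_one {R m n κ : Type*} [CommRing R] [IsDomain R]
    [IsPrincipalIdealRing R] [Fintype m] [DecidableEq m] [Fintype n] [DecidableEq n] [Fintype κ]
    {U : Matrix m κ R} {V : Matrix κ m R} (hUV : U * V = 1)
    (hcard : Fintype.card m + Fintype.card n = Fintype.card κ) :
    ∃ (U' : Matrix n κ R) (V' : Matrix κ n R), fromRows U U' * fromCols V V' = 1 := by
  classical
  let N := LinearMap.ker (mulVecLin U)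
  have hUVy (y : m → R) : U *ᵥ V *ᵥ y = y := by rw [mulVec_mulVec, hUV, one_mulVec]
  have hrank : Module.finrank R N = Module.finrank R (n → R) := by
    have h : Module.finrank R N + _ = _ := finrank_ker_mulVecLin_add_card hUV
    rw [Module.finrank_fintype_fun_eq_card]
    omega
  let g : N ≃ₗ[R] (n → R) := LinearEquiv.ofFinrankEq _ _ hrank
  let π : (κ → R) →ₗ[R] N :=
    (LinearMap.id - mulVecLin V ∘ₗ mulVecLin U).codRestrict N fun x => by
      simp only [N, LinearMap.mem_ker, LinearMap.sub_apply, LinearMap.comp_apply,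
        LinearMap.id_apply, mulVecLin_apply, mulVec_sub, hUVy, sub_self]
  have hπ (x : κ → R) : (π x : κ → R) = x - V *ᵥ U *ᵥ x := rfl
  let U' := LinearMap.toMatrix' (g.toLinearMap ∘ₗ π)
  let V' := LinearMap.toMatrix' (N.subtype ∘ₗ g.symm.toLinearMap)
  have hU' (x : κ → R) : U' *ᵥ x = g (π x) := LinearMap.toMatrix'_mulVec _ x
  have hV' (y : n → R) : V' *ᵥ y = g.symm y := LinearMap.toMatrix'_mulVec _ y
  have hUV' : U * V' = 0 := ext_of_mulVec_single fun i => by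
    rw [← mulVec_mulVec, hV', zero_mulVec]
    exact (g.symm _).2
  have hU'V : U' * V = 0 := ext_of_mulVec_single fun i => by
    have hπV : π (V *ᵥ Pi.single i 1) = 0 := Subtype.ext (by
      rw [hπ, hUVy, sub_self, Submodule.coe_zero])
    rw [← mulVec_mulVec, hU', hπV, map_zero, zero_mulVec]
  have hU'V' : U' * V' = 1 := ext_of_mulVec_single fun i => by
    have hπN (x : N) : π x = x := Subtype.ext (by
      have hx : U *ᵥ x.1 = 0 := x.2
      rw [hπ, hx, mulVec_zero, sub_zero])
    rw [← mulVec_mulVec, hV', hU', hπN, g.apply_symm_apply, one_mulVec]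
  exact ⟨U', V', by rw [fromRows_mul_fromCols, hUV, hUV', hU'V, hU'V', fromBlocks_one]⟩

variable {R ι κ : Type*} [CommRing R] [IsDomain R] [IsPrincipalIdealRing R] [DecidableEq κ]

section Completion

variable [Fintype κ] [Fintype ι] [DecidableEq ι]

lemma exists_mul_eq_one_submatrix_eq {m : Type*} [Finite m] [DecidableEq m] {U : Matrix m κ R}
    {V : Matrix κ m R} (hUV : U * V = 1) (hcard : Fintype.card ι = Fintype.card κ) (e : m ↪ ι) :
    ∃ (P : Matrix ι κ R) (Q : Matrix κ ι R), P * Q = 1 ∧ Q * P = 1 ∧ P.submatrix e id = U := by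
  have := Fintype.ofFinite m
  let σ : m ⊕ ↥(Set.range e)ᶜ ≃ ι :=
    ((Equiv.ofInjective e e.2).sumCongr (Equiv.refl _)).trans (Equiv.Set.sumCompl (Set.range e))
  have hσ (i : m) : σ.symm (e i) = Sum.inl i := σ.symm_apply_eq.2 rfl
  obtain ⟨U', V', h⟩ := exists_fromRows_mul_fromCols_eq_one (n := ↥(Set.range e)ᶜ) hUV (by
    rw [← hcard, ← Fintype.card_sum, Fintype.card_congr σ])
  have hPQ : (fromRows U U').submatrix σ.symm (Equiv.refl κ) *
      (fromCols V V').submatrix (Equiv.refl κ) σ.symm = 1 := by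
    rw [submatrix_mul_equiv, h, submatrix_one_equiv]
  refine ⟨_, _, hPQ, (mul_eq_one_comm_of_card_eq _ _ _ hcard).1 hPQ, ?_⟩
  ext i j
  simp [hσ]

lemma IsNowhereScalar.exists_conj_row_eq_single {A : Matrix κ κ R} (hA : IsNowhereScalar A)
    (hκ : 2 < Fintype.card κ) (hcard : Fintype.card ι = Fintype.card κ) {i j : ι} (hij : i ≠ j) :
    ∃ (P : Matrix ι κ R) (Q : Matrix κ ι R) (α : R), P * Q = 1 ∧ Q * P = 1 ∧
      ∀ l, (P * (A - α • (1 : Matrix κ κ R)) * Q) i l = if l = j then 1 else 0 := by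
  obtain ⟨w, v, hwv, hwAv⟩ := hA.exists_dotProduct_mulVec_eq_one hκ
  obtain ⟨α, hα⟩ : ∃ α, α = w ⬝ᵥ A *ᵥ A *ᵥ v := ⟨_, rfl⟩
  -- The rows `w`, `w (A - α)` are dual to the columns `A v`, `v`.
  have hdual : of ![w, w ᵥ* (A - α • 1)] * (of ![A *ᵥ v, v])ᵀ = 1 := by
    have hvec (x : κ → R) : w ᵥ* (A - α • 1) ⬝ᵥ x = w ⬝ᵥ A *ᵥ x - α * (w ⬝ᵥ x) := by
      rw [← dotProduct_mulVec, sub_mulVec, smul_mulVec, one_mulVec, dotProduct_sub,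
        dotProduct_smul, smul_eq_mul]
    have hvec₀ : w ᵥ* (A - α • 1) ⬝ᵥ A *ᵥ v = 0 := by rw [hvec, ← hα, hwAv, mul_one, sub_self]
    have hvec₁ : w ᵥ* (A - α • 1) ⬝ᵥ v = 1 := by rw [hvec, hwAv, hwv, mul_zero, sub_zero]
    ext r s
    rw [mul_apply']
    fin_cases r <;> fin_cases s
    exacts [hwAv, hwv, hvec₀, hvec₁]
  obtain ⟨P, Q, hPQ, hQP, hP⟩ := exists_mul_eq_one_submatrix_eq hdual hcard
    ⟨![i, j], by simp [Function.Injective, Fin.forall_fin_two, hij, hij.symm]⟩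
  have hPi (l) : P i l = w l := congrFun (congrFun hP 0) l
  have hPj (l) : P j l = (w ᵥ* (A - α • 1)) l := congrFun (congrFun hP 1) l
  refine ⟨P, Q, α, hPQ, hQP, fun l => ?_⟩
  have hrow : (P * (A - α • (1 : Matrix κ κ R)) * Q) i l = (P * Q) j l := by
    simp only [hPj, mul_apply, vecMul, dotProduct, hPi]
  rw [hrow, hPQ, one_apply]
  simp only [eq_comm]

end Completion

section Decomposition

lemma isNowhereScalar_of_span_eq_top {R κ : Type*} [CommRing R] [DecidableEq κ] {A : Matrix κ κ R}
    {i : κ} (hi : A i i = 0) (hA : Ideal.span (Set.range fun x : κ × κ => A x.1 x.2) = ⊤) :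
    IsNowhereScalar A := by
  rintro p hp ⟨c, hc⟩
  have hc₀ : c = 0 := by
    simpa [hi, eq_comm] using congrFun (congrFun hc i) i
  refine hp.ne_top (top_le_iff.1 (hA ▸ Ideal.span_le.2 ?_))
  rintro _ ⟨⟨j, l⟩, rfl⟩
  have hjl := congrFun (congrFun hc j) l
  rw [hc₀, zero_smul] at hjl
  exact Ideal.Quotient.eq_zero_iff_mem.1 hjl

lemma isNowhereScalar_single {R κ : Type*} [CommRing R] [DecidableEq κ] {i j : κ} (hij : i ≠ j) :
    IsNowhereScalar (single i j (1 : R)) := by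
  refine isNowhereScalar_of_span_eq_top (i := i) (by simp [hij.symm]) ?_
  rw [Ideal.eq_top_iff_one]
  exact Ideal.subset_span ⟨(i, j), single_apply_same i j 1⟩

lemma exists_isCoprime_eq_mul (x y : R) : ∃ d a b : R, x = d * a ∧ y = d * b ∧ IsCoprime a b := by
  obtain ⟨d, z, hz, hspan⟩ := exists_eq_smul_span_eq_top ![x, y]
  refine ⟨d, z 0, z 1, congrFun hz 0, congrFun hz 1, ?_⟩
  rw [← Ideal.isCoprime_span_singleton_iff, Ideal.isCoprime_iff_sup_eq, ← Ideal.span_union]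
  convert hspan
  ext
  simp [or_comm, eq_comm]

lemma exists_eq_smul_one_add_smul [Nontrivial κ] (A : Matrix κ κ R) :
    ∃ (a b : R) (A₀ : Matrix κ κ R), A = a • 1 + b • A₀ ∧ IsNowhereScalar A₀ := by
  obtain ⟨i, j, hij⟩ := exists_pair_ne κ
  obtain ⟨b, z, hz, hspan⟩ :=
    exists_eq_smul_span_eq_top fun x : κ × κ => (A - A i i • 1) x.1 x.2
  have hA : A = A i i • 1 + b • of fun r s => z (r, s) := by
    rw [← sub_eq_iff_eq_add']
    ext r s
    exact congrFun hz (r, s)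
  by_cases hb : b = 0
  · refine ⟨A i i, 0, single i j 1, ?_, isNowhereScalar_single hij⟩
    rwa [hb, zero_smul, ← zero_smul R (single i j (1 : R))] at hA
  · refine ⟨A i i, b, _, hA, isNowhereScalar_of_span_eq_top (i := i) ?_ hspan⟩
    simpa [hb] using congrFun hz (i, i)

lemma exists_eq_smul_isNowhereScalar [Fintype κ] [Nontrivial κ] {A : Matrix κ κ R}
    (hA : A.trace = 0) : ∃ (d a b : R) (A₀ : Matrix κ κ R), A = d • (a • 1 + b • A₀) ∧
      (a • 1 + b • A₀).trace = 0 ∧ IsCoprime a b ∧ IsNowhereScalar A₀ := by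
  obtain ⟨a', b', A₀, hA₀, hns⟩ := exists_eq_smul_one_add_smul A
  obtain ⟨d, a, b, rfl, rfl, hab⟩ := exists_isCoprime_eq_mul a' b'
  rw [mul_smul, mul_smul, ← smul_add] at hA₀
  by_cases hd : d = 0
  · obtain ⟨i, j, hij⟩ := exists_pair_ne κ
    refine ⟨0, 0, 1, single i j 1, ?_, ?_, isCoprime_one_right, isNowhereScalar_single hij⟩
    · rw [hA₀, hd, zero_smul, zero_smul]
    · rw [zero_smul, zero_add, one_smul, trace_single_eq_of_ne _ _ _ hij]
  · rw [hA₀, trace_smul, smul_eq_mul] at hA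
    exact ⟨d, a, b, A₀, hA₀, (mul_eq_zero.1 hA).resolve_left hd, hab, hns⟩

end Decomposition

end NormalForm

theorem isRegularCommutator_of_trace_eq_zero {R κ : Type*} [CommRing R] [IsDomain R]
    [IsPrincipalIdealRing R] [Fintype κ] [DecidableEq κ] (hκ : 2 < Fintype.card κ)
    {A : Matrix κ κ R} (hA : A.trace = 0) : IsRegularCommutator A := by
  have : Nontrivial κ := Fintype.one_lt_card_iff_nontrivial.1 (one_lt_two.trans hκ)
  obtain ⟨k, hk⟩ := Nat.exists_eq_add_of_le' hκ.le
  have hcard : Fintype.card (Unit ⊕ Fin (k + 1)) = Fintype.card κ := by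
    rw [Fintype.card_sum, Fintype.card_unit, Fintype.card_fin, hk, add_comm, add_assoc]
  obtain ⟨d, a, b, A₀, rfl, htr, hab, hA₀⟩ := exists_eq_smul_isNowhereScalar hA
  obtain ⟨P, Q, α, hPQ, hQP, hrow⟩ := hA₀.exists_conj_row_eq_single hκ
    hcard (Sum.inl_ne_inr (a := ()) (b := 0))
  have hconj : a • 1 + b • A₀ = conjAlgHom P Q hPQ hQP
      ((a + b * α) • 1 + b • conjAlgHom Q P hQP hPQ (A₀ - α • 1)) := by
    rw [map_add, map_smul, map_smul, map_one, conjAlgHom_conjAlgHom_symm]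
    module
  rw [hconj, trace_conjAlgHom] at htr
  rw [hconj]
  exact ((isRegularCommutator_of_row_eq_single (by omega) (hab.add_mul_left_left α) hrow
    htr).conj hPQ hQP).smul d

/-- Main theorem: over a PID `R` with `n ≥ 3`, every trace-zero matrix `A` is a commutator
`[X, Y]` of trace-zero matrices, where `X` can be chosen so that `X mod p` is
`gl_n(R/p)`-regular for every maximal ideal `p`, and `sl_n(R/p)`-regular for every maximal
ideal `p` such that `A mod p` is non-scalar. -/
theorem trace_zero_is_commutator_PID {R : Type*} [CommRing R] [IsDomain R]
    [IsPrincipalIdealRing R] {n : ℕ} (hn : 3 ≤ n)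
    (A : Matrix (Fin n) (Fin n) R) (hA : A.trace = 0) :
    ∃ X Y : Matrix (Fin n) (Fin n) R,
      X.trace = 0 ∧ Y.trace = 0 ∧ X * Y - Y * X = A ∧
      (∀ (p : Ideal R), p.IsMaximal →
        Module.finrank (R ⧸ p) (glCent (X.map (Ideal.Quotient.mk p))) = n) ∧
      (∀ (p : Ideal R), p.IsMaximal →
        ¬ (∃ c : R ⧸ p, A.map (Ideal.Quotient.mk p) = c • (1 : Matrix (Fin n) (Fin n) (R ⧸ p))) →
        Module.finrank (R ⧸ p) (slCent (X.map (Ideal.Quotient.mk p))) = n - 1) := by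
  obtain ⟨X, Y, W, hX, hY, hXY, hXW, hreg⟩ :=
    isRegularCommutator_of_trace_eq_zero (by rwa [Fintype.card_fin]) hA
  have hgl (p : Ideal R) (hp : p.IsMaximal) :
      Module.finrank (R ⧸ p) (glCent (X.map (Ideal.Quotient.mk p))) = n := by
    obtain ⟨ρ, hρ⟩ := (hreg p hp).1
    exact hρ.finrank_glCent
  refine ⟨X, Y, hX, hY, hXY, hgl, fun p hp hns => Nat.eq_sub_of_add_eq ?_⟩
  let _ := Ideal.Quotient.field p
  have hXWp := hXW.map (Ideal.Quotient.mk p).mapMatrix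
  refine (finrank_slCent_add_one hXWp fun hW => hns ?_).trans (hgl p hp)
  rw [RingHom.mapMatrix_apply, ← AddMonoidHom.map_trace] at hW
  exact (hreg p hp).2 (Ideal.Quotient.eq_zero_iff_mem.1 hW)
end

section
/- Let R be a commutative principal ideal ring (commutative ring with identity, not necessarily a domain, in which every ideal is principal) and A ∈ sl_n(R) a trace-zero matrix with n ≥ 3. Then there exist trace-zero matrices X, Y ∈ sl_n(R) such that XY − YX = A. -/
open Matrix

/-!
Among the off-diagonal entries of matrices conjugate to `A`, take a `b` with no proper divisor of
the same kind. Using the freedom left in the choice of a basis, minimality of `b` forces `A` to be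
conjugate to a matrix with first row `(a, b, 0, …, 0)` that is congruent to `a • 1` modulo `b`.

Such a matrix is a commutator `X * Y - Y * X` with `X` the companion matrix `N` of `t ^ (n - 1) - b`
bordered by a zero row and a column `w`. For the lower right block `Z` of `Y` the equation reads
`N * Z - Z * N = G`, which is solvable as soon as every `N ^ r * G` has trace zero, and this
determines `w`. For the column `ζ` of `Y` below its corner it reads `N *ᵥ ζ = v`, solvable as soon
as `b` divides the last entry of `v`; this follows from `trace (Z * (N * Z - Z * N)) = 0`.
-/

section PrincipalIdealRing

variable {R : Type*} [CommRing R]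

theorem exists_maximal_span_cofactors [IsNoetherianRing R] (a b : R) :
    ∃ g x y : R, a = g * x ∧ b = g * y ∧ ∀ c x' y' : R, x = c * x' → y = c * y' →
      Ideal.span {x', y'} ≤ Ideal.span {x, y} := by
  obtain ⟨⟨g, x, y⟩, ⟨hx, hy⟩, hmax⟩ := exists_maximalFor_of_wellFoundedGT
    (fun t : R × R × R => a = t.1 * t.2.1 ∧ b = t.1 * t.2.2)
    (fun t => Ideal.span {t.2.1, t.2.2}) ⟨(1, a, b), by simp⟩
  refine ⟨g, x, y, hx, hy, ?_⟩
  rintro c x' y' rfl rfl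
  refine hmax (j := (g * c, x', y')) ⟨by rw [hx, mul_assoc], by rw [hy, mul_assoc]⟩ ?_
  simp only [Ideal.span_le, Set.pair_subset_iff, SetLike.mem_coe]
  exact ⟨Ideal.mul_mem_left _ _ (Ideal.subset_span (by simp)),
    Ideal.mul_mem_left _ _ (Ideal.subset_span (by simp))⟩

theorem exists_eq_mul_isCoprime [IsPrincipalIdealRing R] (a b : R) :
    ∃ g a' b' : R, a = g * a' ∧ b = g * b' ∧ IsCoprime a' b' := by
  obtain ⟨g, x, y, ha, hb, hmax⟩ := exists_maximal_span_cofactors a b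
  set c := IsBezout.gcd x y
  obtain ⟨x', hx⟩ : c ∣ x := IsBezout.gcd_dvd_left x y
  obtain ⟨y', hy⟩ : c ∣ y := IsBezout.gcd_dvd_right x y
  obtain ⟨u, v, huv⟩ : ∃ u v, u * x + v * y = c := IsBezout.gcd_eq_sum x y
  have hle : Ideal.span {x', y'} ≤ Ideal.span {c} :=
    (hmax c x' y' hx hy).trans_eq (IsBezout.span_gcd x y).symm
  obtain ⟨x'', hx'⟩ : c ∣ x' := Ideal.mem_span_singleton.1 (hle (Ideal.subset_span (by simp)))
  obtain ⟨y'', hy'⟩ : c ∣ y' := Ideal.mem_span_singleton.1 (hle (Ideal.subset_span (by simp)))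
  -- Hence `e = u * x' + v * y'` is an idempotent with `c * e = c`. Where `e = 1`, the new
  -- cofactors are already coprime; where `e = 0`, they can be replaced by `1` and `0`.
  set e := u * x' + v * y' with he
  have hce : c * e = c := by linear_combination huv - u * hx - v * hy
  have hxe : x' * e = x' := by rw [hx']; linear_combination x'' * hce
  have hye : y' * e = y' := by rw [hy']; linear_combination y'' * hce
  have hee : e * e = e := by linear_combination u * hxe + v * hye + he * (e - 1)
  refine ⟨g * c, x' + (1 - e), y', ?_, ?_, e * u + (1 - e), v, ?_⟩
  · linear_combination ha + g * hx + g * hce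
  · linear_combination hb + g * hy
  · linear_combination (u - 1) * hxe + (1 - u) * hee - he

end PrincipalIdealRing

section Endomorphism

open Module

variable {R M : Type*} [CommRing R] [AddCommGroup M] [Module R M]

/-- The scalars `l (φ v)` with `l` a unimodular functional and `v ∈ ker l`. For a module over a
Hermite ring they are the possible off-diagonal entries of matrices of `φ`, up to multiples. -/
def offDiagonalValues (φ : End R M) : Set R :=
  {c | ∃ (l : Dual R M) (u v : M), l u = 1 ∧ l v = 0 ∧ l (φ v) = c}

theorem offDiagonalValues_sub_smul_one (φ : End R M) (a : R) :
    offDiagonalValues (φ - a • 1) = offDiagonalValues φ := by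
  ext c
  have (l : Dual R M) (v : M) (hv : l v = 0) : l ((φ - a • 1) v) = l (φ v) := by simp [hv]
  constructor <;> rintro ⟨l, u, v, hu, hv, rfl⟩
  exacts [⟨l, u, v, hu, hv, (this l v hv).symm⟩, ⟨l, u, v, hu, hv, this l v hv⟩]

/-- `b` is an off-diagonal value of `φ` generating a maximal ideal among those generated by
off-diagonal values, i.e. no proper divisor of `b` is an off-diagonal value. -/
def IsExtremalValue (φ : End R M) (b : R) : Prop :=
  MaximalFor (· ∈ offDiagonalValues φ) (fun c => Ideal.span {c}) b

theorem exists_isExtremalValue [IsNoetherianRing R] {l : Dual R M} {u : M} (hu : l u = 1)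
    (φ : End R M) : ∃ b, IsExtremalValue φ b :=
  exists_maximalFor_of_wellFoundedGT _ _ ⟨0, l, u, 0, hu, by simp⟩

variable {φ : End R M} {b : R}

namespace IsExtremalValue

theorem dvd_of_dvd (hb : IsExtremalValue φ b) {c : R} (hc : c ∈ offDiagonalValues φ)
    (hcb : c ∣ b) : b ∣ c :=
  Ideal.span_singleton_le_span_singleton.1
    (hb.2 hc (Ideal.span_singleton_le_span_singleton.2 hcb))

theorem of_dvd (hb : IsExtremalValue φ b) {c : R} (hc : c ∈ offDiagonalValues φ) (hcb : c ∣ b) :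
    IsExtremalValue φ c :=
  ⟨hc, fun _ hd hcd => (hb.2 hd ((Ideal.span_singleton_le_span_singleton.2 hcb).trans hcd)).trans
    (Ideal.span_singleton_le_span_singleton.2 hcb)⟩

theorem sub_smul_one (hb : IsExtremalValue φ b) (a : R) : IsExtremalValue (φ - a • 1) b := by
  rwa [IsExtremalValue, offDiagonalValues_sub_smul_one]

theorem dvd_apply_of_mem_ker [IsBezout R] (hb : IsExtremalValue φ b) {l : Dual R M} {u v w : M}
    (hu : l u = 1) (hv : l v = 0) (hlv : l (φ v) = b) (hw : l w = 0) : b ∣ l (φ w) := by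
  obtain ⟨x, y, hxy⟩ := IsBezout.gcd_eq_sum b (l (φ w))
  have hgcd : IsBezout.gcd b (l (φ w)) ∈ offDiagonalValues φ :=
    ⟨l, u, x • v + y • w, hu, by simp [hv, hw], by simp [hlv, hxy]⟩
  exact (hb.dvd_of_dvd hgcd (IsBezout.gcd_dvd_left _ _)).trans (IsBezout.gcd_dvd_right _ _)

theorem dvd_apply_left [IsBezout R] (hb : IsExtremalValue φ b) {e : Dual R M} {e' u : M}
    (hee : e e' = 1) (heu : e u = 0) (heφu : e (φ u) = b) (heφe : e (φ e') = 0) (w : M) :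
    b ∣ e (φ w) := by
  have : b ∣ e (φ (w - e w • e')) := hb.dvd_apply_of_mem_ker hee heu heφu (by simp [hee])
  simpa [heφe] using this

variable [IsPrincipalIdealRing R]

/-- A unimodular combination of `e` and `f` maps `φ u` to a common divisor of `b` and `f (φ u)`. -/
theorem dvd_apply_of_dual_pair (hb : IsExtremalValue φ b) {e f : Dual R M} {e' f' u : M}
    (hee : e e' = 1) (hef : e f' = 0) (hfe : f e' = 0) (hff : f f' = 1)
    (heu : e u = 0) (hfu : f u = 0) (heφu : e (φ u) = b) : b ∣ f (φ u) := by
  obtain ⟨g, m, p, hm, hp, x, y, hxy⟩ := exists_eq_mul_isCoprime b (f (φ u))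
  have hg : g ∈ offDiagonalValues φ := by
    refine ⟨x • e + y • f, m • e' + p • f', u, ?_, by simp [heu, hfu], ?_⟩
    · simpa [hee, hef, hfe, hff, mul_comm] using hxy
    · simp only [LinearMap.add_apply, LinearMap.smul_apply, smul_eq_mul, heφu, hp]
      linear_combination g * hxy + x * hm
  exact (hb.dvd_of_dvd hg ⟨m, hm⟩).trans ⟨p, hp⟩

/-- The functionals `t • e + f` take the values `t * b` at `u` and `f (φ e') - t * f (φ f')` at
`e' - t • f'`. For `t = 1` this gives the congruence of `f (φ e')` and `f (φ f')` modulo `b`; for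
`t` the cofactor of `gcd b (f (φ e'))` in `b` it gives `b ∣ f (φ e')`. -/
theorem dvd_apply_dual_pair_of_apply_eq_zero (hb : IsExtremalValue φ b) {e f : Dual R M}
    {e' f' u : M} (hee : e e' = 1) (hef : e f' = 0) (hfe : f e' = 0) (hff : f f' = 1)
    (heu : e u = 0) (hfu : f u = 0) (heφu : e (φ u) = b) (heφe : e (φ e') = 0)
    (heφf : e (φ f') = 0) (hfφu : f (φ u) = 0) : b ∣ f (φ e') ∧ b ∣ f (φ f') := by
  have hf' (t : R) : (t • e + f) f' = 1 := by simp [hef, hff]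
  have hu (t : R) : (t • e + f) u = 0 := by simp [heu, hfu]
  have hφu (t : R) : (t • e + f) (φ u) = t * b := by simp [heφu, hfφu]
  have hv (t : R) : (t • e + f) (e' - t • f') = 0 := by simp [hee, hef, hfe, hff]
  have hφv (t : R) : (t • e + f) (φ (e' - t • f')) = f (φ e') - t * f (φ f') := by
    simp [heφe, heφf]
  obtain ⟨μ, hμ⟩ : b ∣ f (φ e') - f (φ f') := by
    simpa only [hφv, one_mul] using
      hb.dvd_apply_of_mem_ker (hf' 1) (hu 1) (by rw [hφu, one_mul]) (hv 1)
  suffices hbe : b ∣ f (φ e') from ⟨hbe, (dvd_sub_right hbe).1 ⟨μ, hμ⟩⟩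
  obtain ⟨g, m, p, hm, hp, hmp⟩ := exists_eq_mul_isCoprime b (f (φ e'))
  obtain ⟨s, r, hsr⟩ : IsCoprime (m * m) (p * (1 - m)) :=
    have hm1 : IsCoprime m (1 - m) := ⟨1, 1, by ring⟩
    (hmp.mul_left hmp).mul_right (hm1.mul_left hm1)
  have hg : g ∈ offDiagonalValues φ := by
    refine ⟨m • e + f, f', (s - r * μ) • u + r • (e' - m • f'), hf' m, ?_, ?_⟩
    · rw [map_add, map_smul, map_smul, hu, hv, smul_zero, smul_zero, add_zero]
    · rw [map_add, map_smul, map_smul, map_add, map_smul, map_smul, hφu, hφv, smul_eq_mul,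
        smul_eq_mul]
      linear_combination g * hsr + r * m * hμ + (r - r * m) * hp + s * m * hm
  exact (hb.dvd_of_dvd hg ⟨m, hm⟩).trans ⟨p, hp⟩

theorem dvd_apply_of_apply_eq_zero (hb : IsExtremalValue φ b) {e f : Dual R M} {e' f' u : M}
    (hee : e e' = 1) (hef : e f' = 0) (hfe : f e' = 0) (hff : f f' = 1)
    (heu : e u = 0) (hfu : f u = 0) (heφu : e (φ u) = b) (heφe : e (φ e') = 0)
    (heφf : e (φ f') = 0) (hfφu : f (φ u) = 0) (w : M) : b ∣ f (φ w) := by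
  obtain ⟨hbe, hbf⟩ :=
    hb.dvd_apply_dual_pair_of_apply_eq_zero hee hef hfe hff heu hfu heφu heφe heφf hfφu
  have hker {z : M} (hez : e z = 0) (hfz : f z = 0) : b ∣ f (φ z) := by
    have heφz : b ∣ e (φ z) := hb.dvd_apply_of_mem_ker hee heu heφu hez
    have hsum : b ∣ (e + f) (φ z) :=
      hb.dvd_apply_of_mem_ker (u := f') (v := u) (by simp [hef, hff]) (by simp [heu, hfu])
        (by simp [heφu, hfφu]) (by simp [hez, hfz])
    exact (dvd_add_right heφz).1 hsum
  have hw : f (φ w) = e w * f (φ e') + f w * f (φ f') + f (φ (w - e w • e' - f w • f')) := by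
    simp
  rw [hw]
  exact dvd_add (dvd_add (hbe.mul_left _) (hbf.mul_left _))
    (hker (by simp [hee, hef]) (by simp [hfe, hff]))

theorem dvd_apply_right (hb : IsExtremalValue φ b) {e f : Dual R M} {e' f' u : M}
    (hee : e e' = 1) (hef : e f' = 0) (hfe : f e' = 0) (hff : f f' = 1)
    (heu : e u = 0) (hfu : f u = 0) (heφu : e (φ u) = b) (heφe : e (φ e') = 0)
    (heφf : e (φ f') = 0) (w : M) : b ∣ f (φ w) := by
  obtain ⟨c, hc⟩ := hb.dvd_apply_of_dual_pair hee hef hfe hff heu hfu heφu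
  have hsub : b ∣ (f - c • e) (φ w) :=
    hb.dvd_apply_of_apply_eq_zero (e := e) (e' := e' + c • f') (f' := f') (u := u)
      (by simp [hee, hef]) hef (by simp [hee, hef, hfe, hff]) (by simp [hff, hef]) heu
      (by simp [heu, hfu]) heφu (by simp [heφe, heφf]) heφf (by simp [hc, heφu, mul_comm]) w
  have hadd : f (φ w) = (f - c • e) (φ w) + c * e (φ w) := by simp
  rw [hadd]
  exact dvd_add hsub ((hb.dvd_apply_left hee heu heφu heφe w).mul_left c)

variable {ι : Type*} (β : Basis ι R M)

theorem dvd_coord_sub_smul_one {o p q : ι} (hop : o ≠ p) (hoq : o ≠ q) (hpq : p ≠ q)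
    (hb : IsExtremalValue φ (β.coord o (φ (β p))))
    (hrow : ∀ j, j ≠ o → j ≠ p → β.coord o (φ (β j)) = 0) (i : ι) (w : M) :
    β.coord o (φ (β p)) ∣ β.coord i ((φ - β.coord o (φ (β o)) • 1) w) := by
  set b := β.coord o (φ (β p)) with hbdef
  set ψ := φ - β.coord o (φ (β o)) • 1 with hψ
  replace hb : IsExtremalValue ψ b := hb.sub_smul_one _
  have hψo : β.coord o (ψ (β o)) = 0 := by simp [hψ]
  have hψp : β.coord o (ψ (β p)) = b := by simp [hψ, hbdef, hop]
  have hψj (j : ι) (hjo : j ≠ o) (hjp : j ≠ p) : β.coord o (ψ (β j)) = 0 := by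
    simpa [hψ, hjo] using hrow j hjo hjp
  have hother {k : ι} (hko : k ≠ o) (hkp : k ≠ p) : b ∣ β.coord k (ψ w) :=
    hb.dvd_apply_right (e := β.coord o) (e' := β o) (f' := β k) (u := β p) (by simp)
      (by simp [hko]) (by simp [hko.symm]) (by simp) (by simp [hop.symm])
      (by simp [hkp.symm]) hψp hψo (hψj k hko hkp) w
  by_cases hio : i = o
  · subst hio
    exact hb.dvd_apply_left (u := β p) (by simp) (by simp [hop.symm]) hψp hψo w
  by_cases hip : i = p
  · subst hip
    -- `β.coord i` does not vanish at `β i`, but `β.coord i + β.coord q` vanishes at `β i - β q`.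
    have hsum : b ∣ (β.coord i + β.coord q) (ψ w) :=
      hb.dvd_apply_right (e := β.coord o) (e' := β o) (f' := β q) (u := β i - β q) (by simp)
        (by simp [hoq.symm]) (by simp [hop, hoq]) (by simp [hpq.symm])
        (by simp [hop.symm, hoq.symm]) (by simp [hpq, hpq.symm])
        (by rw [map_sub, map_sub, hψp, hψj q hoq.symm hpq.symm, sub_zero]) hψo
        (hψj q hoq.symm hpq.symm) w
    exact (dvd_add_left (hother hoq.symm hpq.symm)).1 hsum
  · exact hother hio hip

end IsExtremalValue

end Endomorphism

section Basis

open Module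

variable {ι R M : Type*} [CommRing R] [AddCommGroup M] [Module R M]

theorem exists_linearEquiv_apply_pair (β : Basis ι R M) {i j : ι} (hij : i ≠ j) {x y a d : R}
    (h : x * a + y * d = 1) :
    ∃ T : M ≃ₗ[R] M, T (β i) = x • β i + y • β j ∧ T (β j) = a • β j - d • β i ∧
      ∀ k, k ≠ i → k ≠ j → T (β k) = β k := by
  classical
  let T (x y a d : R) : M →ₗ[R] M := β.constr ℕ fun k =>
    if k = i then x • β i + y • β j else if k = j then a • β j - d • β i else β k
  have hTi (x y a d : R) : T x y a d (β i) = x • β i + y • β j := by simp [T]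
  have hTj (x y a d : R) : T x y a d (β j) = a • β j - d • β i := by simp [T, hij.symm]
  have hTk (x y a d : R) {k : ι} (hki : k ≠ i) (hkj : k ≠ j) : T x y a d (β k) = β k := by
    simp [T, hki, hkj]
  have hinv {x y a d : R} (h : x * a + y * d = 1) : T x y a d ∘ₗ T a (-y) x (-d) = .id := by
    refine β.ext fun k => ?_
    rw [LinearMap.comp_apply, LinearMap.id_apply]
    rcases eq_or_ne k i with rfl | hki
    · rw [hTi, map_add, map_smul, map_smul, hTi, hTj]
      match_scalars <;> grind
    rcases eq_or_ne k j with rfl | hkj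
    · rw [hTj, map_sub, map_smul, map_smul, hTi, hTj]
      match_scalars <;> grind
    · rw [hTk _ _ _ _ hki hkj, hTk _ _ _ _ hki hkj]
  have hinv' : T a (-y) x (-d) ∘ₗ T x y a d = .id := by
    simpa using hinv (x := a) (y := -y) (a := x) (d := -d) (by linear_combination h)
  exact ⟨.ofLinearMap _ _ (hinv h) hinv', hTi x y a d, hTj x y a d, fun _ => hTk x y a d⟩

theorem exists_basis_replace_pair (β : Basis ι R M) {i j : ι} (hij : i ≠ j) {x y a d : R}
    (h : x * a + y * d = 1) :
    ∃ β' : Basis ι R M, β' j = a • β j - d • β i ∧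
      ∀ k, k ≠ i → k ≠ j → β' k = β k ∧ β'.coord k = β.coord k := by
  obtain ⟨T, hi, hj, hk⟩ := exists_linearEquiv_apply_pair β hij h
  refine ⟨β.map T, hj, fun k hki hkj => ⟨hk k hki hkj, (β.map T).ext fun m => ?_⟩⟩
  rw [(β.map T).coord_apply, (β.map T).repr_self, β.map_apply]
  rcases eq_or_ne m i with rfl | hmi
  · simp [hi, hki.symm, hkj.symm]
  rcases eq_or_ne m j with rfl | hmj
  · simp [hj, hki.symm, hkj.symm]
  · simp [hk m hmi hmj]

theorem apply_eq_add_of_basis_apply_eq_zero (β : Basis ι R M) {l : Dual R M} {o p : ι} (hop : o ≠ p)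
    (hl : ∀ j, j ≠ o → j ≠ p → l (β j) = 0) (w : M) :
    l w = l (β o) * β.coord o w + l (β p) * β.coord p w := by
  suffices l = l (β o) • β.coord o + l (β p) • β.coord p from LinearMap.congr_fun this w
  refine β.ext fun j => ?_
  rcases eq_or_ne j o with rfl | hjo
  · simp [hop]
  rcases eq_or_ne j p with rfl | hjp
  · simp [hop.symm]
  · simp [hjo, hjp, hl j hjo hjp]

variable [IsPrincipalIdealRing R]

theorem exists_basis_apply_eq_zero (β : Basis ι R M) (l : Dual R M) {i : ι} {s : Finset ι}
    (hi : i ∉ s) :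
    ∃ β' : Basis ι R M, (∀ j ∈ s, l (β' j) = 0) ∧
      ∀ k, k ≠ i → k ∉ s → β'.coord k = β.coord k := by
  classical
  induction s using Finset.induction with
  | empty => exact ⟨β, by simp⟩
  | insert j s hj ih =>
    obtain ⟨hij, his⟩ : i ≠ j ∧ i ∉ s := by simpa using hi
    obtain ⟨β₁, hzero, hcoord⟩ := ih his
    obtain ⟨g, a, d, ha, hd, x, y, hxy⟩ := exists_eq_mul_isCoprime (l (β₁ i)) (l (β₁ j))
    obtain ⟨β₂, hβ₂j, hβ₂⟩ := exists_basis_replace_pair β₁ hij hxy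
    refine ⟨β₂, fun k hk => ?_, fun k hki hk => ?_⟩
    · rcases Finset.mem_insert.1 hk with rfl | hks
      · rw [hβ₂j, map_sub, map_smul, map_smul, ha, hd, smul_eq_mul, smul_eq_mul]
        ring
      · rw [(hβ₂ k (ne_of_mem_of_not_mem hks his) (ne_of_mem_of_not_mem hks hj)).1, hzero k hks]
    · obtain ⟨hkj, hks⟩ : k ≠ j ∧ k ∉ s := by simpa using hk
      exact (hβ₂ k hki hkj).2.trans (hcoord k hki hks)

theorem exists_basis_isExtremalValue [Finite ι] (β : Basis ι R M) (φ : End R M) {o p : ι}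
    (hop : o ≠ p) :
    ∃ β' : Basis ι R M, (∀ j, j ≠ o → j ≠ p → β'.coord o (φ (β' j)) = 0) ∧
      IsExtremalValue φ (β'.coord o (φ (β' p))) := by
  classical
  have := Fintype.ofFinite ι
  obtain ⟨_, hb⟩ := exists_isExtremalValue (l := β.coord o) (u := β o) (by simp) φ
  obtain ⟨l, u, v, hu, hv, rfl⟩ := id hb.1
  obtain ⟨β₁, hl, -⟩ := exists_basis_apply_eq_zero β l (Finset.notMem_erase o Finset.univ)
  obtain ⟨β₂, hφ, hcoord⟩ := exists_basis_apply_eq_zero β₁ (β₁.coord o ∘ₗ φ) (i := p)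
    (s := (Finset.univ.erase o).erase p) (by simp)
  replace hcoord : β₂.coord o = β₁.coord o := hcoord o hop (by simp)
  replace hφ (j : ι) (hjo : j ≠ o) (hjp : j ≠ p) : β₂.coord o (φ (β₂ j)) = 0 := by
    simpa [hcoord] using hφ j (by simp [hjo, hjp])
  have hl_eq (w : M) : l w = l (β₁ o) * β₂.coord o w := by
    rw [apply_eq_add_of_basis_apply_eq_zero β₁ hop (fun j hj _ => hl j (by simp [hj])) w,
      hl p (by simp [hop.symm]), zero_mul, add_zero, hcoord]
  have hvo : β₂.coord o v = 0 := by
    linear_combination β₂.coord o u * (hv - hl_eq v) + β₂.coord o v * (hl_eq u - hu)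
  refine ⟨β₂, hφ, hb.of_dvd ⟨β₂.coord o, β₂ o, β₂ p, by simp, by simp [hop.symm], rfl⟩ ?_⟩
  have hφv : β₂.coord o (φ v) = β₂.coord o (φ (β₂ p)) * β₂.coord p v := by
    simpa [hvo] using apply_eq_add_of_basis_apply_eq_zero β₂ (l := β₂.coord o ∘ₗ φ) hop hφ v
  rw [hl_eq, hφv]
  exact (dvd_mul_right _ _).mul_left _

theorem exists_basis_toMatrix_dvd [Fintype ι] [DecidableEq ι] (β : Basis ι R M) (φ : End R M)
    {o p q : ι} (hop : o ≠ p) (hoq : o ≠ q) (hpq : p ≠ q) :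
    ∃ β' : Basis ι R M, (∀ j, j ≠ o → j ≠ p → LinearMap.toMatrix β' β' φ o j = 0) ∧
      ∀ i j, LinearMap.toMatrix β' β' φ o p ∣
        (LinearMap.toMatrix β' β' φ - LinearMap.toMatrix β' β' φ o o • 1) i j := by
  obtain ⟨β', hrow, hb⟩ := exists_basis_isExtremalValue β φ hop
  simp only [LinearMap.toMatrix_apply]
  refine ⟨β', hrow, fun i j => ?_⟩
  have := hb.dvd_coord_sub_smul_one β' hop hoq hpq hrow i (β' j)
  simpa [LinearMap.toMatrix_apply, one_apply, Finsupp.single_apply, eq_comm] using this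

end Basis

section Companion

variable {R : Type*} [CommRing R]

theorem trace_mul_commutator_eq_zero {n : Type*} [Fintype n] {P A : Matrix n n R}
    (h : Commute P A) (B : Matrix n n R) : (P * (A * B - B * A)).trace = 0 := by
  rw [mul_sub, trace_sub, ← mul_assoc, ← mul_assoc, trace_mul_comm _ A, ← mul_assoc, h.eq, sub_self]

theorem trace_mul_vecMulVec {n : Type*} [Fintype n] (P : Matrix n n R) (v w : n → R) :
    (P * vecMulVec v w).trace = w ⬝ᵥ P *ᵥ v := by
  rw [mul_vecMulVec, trace_vecMulVec, dotProduct_comm]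

variable {m : ℕ}

/-- The companion matrix with last row `c`: multiplication by `t` on
`R[t] / (t ^ (m + 1) - ∑ i, c i * t ^ i)`, acting on row vectors in the basis `1, t, …, t ^ m`. -/
def companion (c : Fin (m + 1) → R) : Matrix (Fin (m + 1)) (Fin (m + 1)) R :=
  of (Fin.snoc (α := fun _ => Fin (m + 1) → R) (fun i => Pi.single i.succ 1) c)

theorem companion_castSucc (c : Fin (m + 1) → R) (i : Fin m) :
    companion c i.castSucc = Pi.single i.succ 1 :=
  funext fun j => by simp [companion]

theorem companion_last (c : Fin (m + 1) → R) : companion c (Fin.last m) = c :=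
  funext fun j => by simp [companion]

theorem companion_mulVec_castSucc (c v : Fin (m + 1) → R) (i : Fin m) :
    (companion c *ᵥ v) i.castSucc = v i.succ := by
  rw [mulVec, companion_castSucc, single_one_dotProduct]

theorem companion_mulVec_last (c v : Fin (m + 1) → R) :
    (companion c *ᵥ v) (Fin.last m) = c ⬝ᵥ v := by
  rw [mulVec, companion_last]

theorem vecMul_companion_succ (c v : Fin (m + 1) → R) (j : Fin m) :
    (v ᵥ* companion c) j.succ = v j.castSucc + v (Fin.last m) * c j.succ := by
  simp [vecMul, dotProduct, Fin.sum_univ_castSucc, companion_castSucc, companion_last,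
    Pi.single_apply]

theorem single_zero_vecMul_companion_pow (c : Fin (m + 1) → R) (r : Fin (m + 1)) :
    Pi.single 0 1 ᵥ* companion c ^ (r : ℕ) = Pi.single r 1 := by
  induction r using Fin.induction with
  | zero => simp
  | succ r ih =>
    rw [Fin.val_succ, pow_succ, ← vecMul_vecMul, ← Fin.val_castSucc, ih, single_one_vecMul]
    exact companion_castSucc c r

theorem exists_commutator_companion_add_vecMulVec (c : Fin (m + 1) → R)
    (G : Matrix (Fin (m + 1)) (Fin (m + 1)) R) :
    ∃ Z T, companion c * Z - Z * companion c + vecMulVec T (Pi.single 0 1) = G := by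
  -- Each column of the equation but the zeroth expresses a column of `Z` through the next one.
  let W : Fin (m + 1) → Fin (m + 1) → R :=
    Fin.reverseInduction 0 fun j w => companion c *ᵥ w - G.col j.succ
  have hW_last : W (Fin.last m) = 0 := Fin.reverseInduction_last ..
  have hW (j : Fin m) : W j.castSucc = companion c *ᵥ W j.succ - G.col j.succ :=
    Fin.reverseInduction_castSucc ..
  let Z : Matrix (Fin (m + 1)) (Fin (m + 1)) R := (of W)ᵀ
  refine ⟨Z, (G - (companion c * Z - Z * companion c)).col 0, ?_⟩
  ext i j
  cases j using Fin.cases with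
  | zero => simp [vecMulVec_apply]
  | succ j =>
    have hNZ : (companion c * Z) i j.succ = (companion c *ᵥ W j.succ) i := rfl
    have hZN : (Z * companion c) i j.succ = W j.castSucc i := by
      rw [mul_apply_eq_vecMul, vecMul_companion_succ]
      simp [Z, hW_last]
    simp [hNZ, hZN, hW, vecMulVec_apply]

theorem exists_companion_commutator_eq (c : Fin (m + 1) → R)
    {G : Matrix (Fin (m + 1)) (Fin (m + 1)) R}
    (hG : ∀ r : Fin (m + 1), (companion c ^ (r : ℕ) * G).trace = 0) :
    ∃ Z, companion c * Z - Z * companion c = G := by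
  obtain ⟨Z, T, rfl⟩ := exists_commutator_companion_add_vecMulVec c G
  suffices T = 0 from ⟨Z, by simp [this]⟩
  ext r
  have := hG r
  rw [mul_add, trace_add, trace_mul_commutator_eq_zero ((Commute.refl _).pow_left _),
    trace_mul_vecMulVec, dotProduct_mulVec, single_zero_vecMul_companion_pow,
    single_one_dotProduct, zero_add] at this
  exact this

end Companion

section CyclicCompanion

variable {R : Type*} [CommRing R] {m : ℕ} (b : R)

theorem companion_single_apply_eq_zero {i j : Fin (m + 1)} (hj : j ≠ i + 1) :
    companion (Pi.single 0 b) i j = 0 := by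
  cases i using Fin.lastCases with
  | last => rw [companion_last, Pi.single_eq_of_ne (by simpa using hj)]
  | cast i => rw [companion_castSucc, Pi.single_eq_of_ne (by simpa using hj)]

open scoped Fin.CommRing in
theorem companion_single_pow_apply_eq_zero (s : ℕ) {i j : Fin (m + 1)} (hj : j ≠ i + s) :
    (companion (Pi.single 0 b) ^ s) i j = 0 := by
  induction s generalizing i with
  | zero => rw [pow_zero, one_apply_ne fun h => hj (by simp [h])]
  | succ s ih =>
    rw [pow_succ', mul_apply]
    refine Finset.sum_eq_zero fun k _ => ?_
    rcases eq_or_ne k (i + 1) with rfl | hk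
    · rw [ih (by rwa [add_assoc, add_comm 1, ← Nat.cast_succ]), mul_zero]
    · rw [companion_single_apply_eq_zero b hk, zero_mul]

open scoped Fin.CommRing in
theorem trace_companion_single_pow_succ (r : Fin m) :
    (companion (Pi.single 0 b : Fin (m + 1) → R) ^ (r + 1 : ℕ)).trace = 0 := by
  refine Finset.sum_eq_zero fun i _ => companion_single_pow_apply_eq_zero b _ ?_
  rw [← Fin.val_succ, Fin.cast_val_eq_self, Ne, left_eq_add]
  exact Fin.succ_ne_zero r

theorem single_last_vecMul_companion_single :
    Pi.single (Fin.last m) 1 ᵥ* companion (Pi.single 0 b) = Pi.single 0 b :=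
  (single_one_vecMul ..).trans (companion_last _)

theorem single_last_dotProduct_companion_single_pow_succ_mulVec (r : Fin (m + 1))
    (w : Fin (m + 1) → R) :
    Pi.single (Fin.last m) 1 ⬝ᵥ companion (Pi.single 0 b) ^ (r + 1 : ℕ) *ᵥ w = b * w r := by
  have hb : (Pi.single 0 b : Fin (m + 1) → R) = b • Pi.single 0 1 := by simp [← Pi.single_smul]
  rw [dotProduct_mulVec, pow_succ', ← vecMul_vecMul, single_last_vecMul_companion_single]
  nth_rw 1 [hb]
  rw [smul_vecMul, single_zero_vecMul_companion_pow, smul_dotProduct, single_one_dotProduct,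
    smul_eq_mul]

theorem exists_companion_single_mulVec_eq {v : Fin (m + 1) → R} (hv : b ∣ v (Fin.last m)) :
    ∃ ζ, companion (Pi.single 0 b) *ᵥ ζ = v := by
  obtain ⟨t, ht⟩ := hv
  refine ⟨Fin.cons t fun i => v i.castSucc, funext fun i => ?_⟩
  cases i using Fin.lastCases with
  | last => rw [companion_mulVec_last, single_dotProduct, Fin.cons_zero, ht]
  | cast i => rw [companion_mulVec_castSucc, Fin.cons_succ]

theorem exists_companion_single_commutator_eq {a : R} {B : Matrix (Fin (m + 1)) (Fin (m + 1)) R}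
    (h : a + (a • 1 + b • B).trace = 0) :
    ∃ (w : Fin (m + 1) → R) (Z : Matrix (Fin (m + 1)) (Fin (m + 1)) R), w (Fin.last m) = a ∧
      companion (Pi.single 0 b) * Z - Z * companion (Pi.single 0 b) =
        a • 1 + b • B + vecMulVec w (Pi.single (Fin.last m) 1) := by
  set N : Matrix (Fin (m + 1)) (Fin (m + 1)) R := companion (Pi.single 0 b)
  let w : Fin (m + 1) → R := Fin.snoc (α := fun _ => R) (fun r => -(N ^ (r + 1 : ℕ) * B).trace) a
  have hw_last : w (Fin.last m) = a := Fin.snoc_last ..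
  suffices hG : ∀ r : Fin (m + 1),
      (N ^ (r : ℕ) * (a • 1 + b • B + vecMulVec w (Pi.single (Fin.last m) 1))).trace = 0 by
    obtain ⟨Z, hZ⟩ := exists_companion_commutator_eq _ hG
    exact ⟨w, Z, hw_last, hZ⟩
  intro r
  rw [mul_add, trace_add, trace_mul_vecMulVec]
  cases r using Fin.cases with
  | zero => simp [hw_last, ← h, add_comm]
  | succ r =>
    have hw : w r.castSucc = -(N ^ (r + 1 : ℕ) * B).trace := Fin.snoc_castSucc ..
    have hpow := single_last_dotProduct_companion_single_pow_succ_mulVec b r.castSucc w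
    have htrace : (N ^ (r + 1 : ℕ)).trace = 0 := trace_companion_single_pow_succ b r
    rw [Fin.val_castSucc, hw] at hpow
    rw [Fin.val_succ, hpow, mul_add, trace_add, mul_smul_comm, mul_smul_comm, trace_smul,
      trace_smul, mul_one, htrace, smul_zero, zero_add, smul_eq_mul, mul_neg, add_neg_cancel]

end CyclicCompanion

section Bordered

variable {R : Type*} [CommRing R]

theorem fromBlocks_commutator {n : Type*} [Fintype n] (t : R) (l w ζ : n → R) (N Z : Matrix n n R) :
    fromBlocks 0 0 (replicateCol (Fin 1) w) N *
          fromBlocks (t • 1) (-replicateRow (Fin 1) l) (replicateCol (Fin 1) ζ) Z -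
        fromBlocks (t • 1) (-replicateRow (Fin 1) l) (replicateCol (Fin 1) ζ) Z *
          fromBlocks 0 0 (replicateCol (Fin 1) w) N =
      fromBlocks ((l ⬝ᵥ w) • 1) (replicateRow (Fin 1) (l ᵥ* N))
        (replicateCol (Fin 1) (t • w + N *ᵥ ζ - Z *ᵥ w)) (N * Z - Z * N - vecMulVec w l) := by
  rw [sub_eq_iff_eq_add, fromBlocks_multiply, fromBlocks_multiply, fromBlocks_add]
  congr 1
  · ext i j
    simp [Subsingleton.elim i j, mul_apply, dotProduct]
  · simp [replicateRow_vecMul]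
  · ext
    simp [mul_apply, mulVec, dotProduct]
  · have hwl : replicateCol (Fin 1) w * replicateRow (Fin 1) l = vecMulVec w l :=
      (vecMulVec_eq (Fin 1) w l).symm
    rw [Matrix.mul_neg, Matrix.mul_zero, hwl]
    abel

variable {k : ℕ}

theorem exists_commutator_eq_fromBlocks (a b : R) (c : Fin (k + 2) → R)
    (B : Matrix (Fin (k + 2)) (Fin (k + 2)) R) (h : a + (a • 1 + b • B).trace = 0) :
    ∃ X Y : Matrix (Fin 1 ⊕ Fin (k + 2)) (Fin 1 ⊕ Fin (k + 2)) R,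
      X.trace = 0 ∧ Y.trace = 0 ∧ X * Y - Y * X =
        fromBlocks (a • 1) (replicateRow (Fin 1) (Pi.single 0 b))
          (replicateCol (Fin 1) (b • c)) (a • 1 + b • B) := by
  obtain ⟨w, Z, rfl, hZ⟩ := exists_companion_single_commutator_eq b h
  have hlast : Z.trace * w (Fin.last _) + (Z *ᵥ w) (Fin.last _) = -(b * (Z * B).trace) := by
    have := trace_mul_commutator_eq_zero (Commute.refl Z) (companion (Pi.single 0 b))
    rw [← neg_sub, hZ, mul_neg, trace_neg, mul_add, mul_add, trace_add, trace_add,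
      trace_mul_vecMulVec, single_one_dotProduct] at this
    simp only [mul_smul_comm, mul_one, trace_smul, smul_eq_mul] at this
    linear_combination -this
  obtain ⟨ζ, hζ⟩ := exists_companion_single_mulVec_eq b
    (v := b • c + Z *ᵥ w + Z.trace • w) ⟨c (Fin.last _) - (Z * B).trace, by
      simp only [Pi.add_apply, Pi.smul_apply, smul_eq_mul]
      linear_combination hlast⟩
  refine ⟨_, _, ?_, ?_, (fromBlocks_commutator (-Z.trace) (Pi.single (Fin.last _) 1) w ζ
    (companion (Pi.single 0 b)) Z).trans ?_⟩
  · simpa [trace] using trace_companion_single_pow_succ b (0 : Fin (k + 1))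
  · simp [trace]
  · rw [hZ, hζ, single_one_dotProduct, single_last_vecMul_companion_single, add_sub_cancel_right]
    congr 2
    module

theorem exists_commutator_eq_of_dvd {A : Matrix (Fin 1 ⊕ Fin (k + 2)) (Fin 1 ⊕ Fin (k + 2)) R}
    (htrace : A.trace = 0) (hrow : ∀ j, j ≠ .inl 0 → j ≠ .inr 0 → A (.inl 0) j = 0)
    (hdvd : ∀ i j, A (.inl 0) (.inr 0) ∣ (A - A (.inl 0) (.inl 0) • 1) i j) :
    ∃ X Y : Matrix (Fin 1 ⊕ Fin (k + 2)) (Fin 1 ⊕ Fin (k + 2)) R,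
      X.trace = 0 ∧ Y.trace = 0 ∧ X * Y - Y * X = A := by
  choose C hC using hdvd
  set a := A (.inl 0) (.inl 0) with ha
  set b := A (.inl 0) (.inr 0) with hb
  have hA : A = fromBlocks (a • 1) (replicateRow (Fin 1) (Pi.single 0 b))
      (replicateCol (Fin 1) (b • fun i => C (.inr i) (.inl 0)))
      (a • 1 + b • (of C).toBlocks₂₂) := by
    ext (i | i) (j | j)
    · simp [Subsingleton.elim i 0, Subsingleton.elim j 0, ha]
    · rw [Subsingleton.elim i 0]
      rcases eq_or_ne j 0 with rfl | hj
      · simp [hb]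
      · simp [hrow (.inr j) (by simp) (by simpa using hj), hj]
    · simpa [Subsingleton.elim j 0] using hC (.inr i) (.inl 0)
    · have := hC (.inr i) (.inr j)
      simp [toBlocks₂₂, ← this, one_apply]
  rw [hA] at htrace ⊢
  exact exists_commutator_eq_fromBlocks a b _ _ (by simpa [trace] using htrace)

end Bordered

/-- Over any commutative principal ideal ring `R` (not necessarily a domain), every
trace-zero matrix `A` with `n ≥ 3` is a commutator of two trace-zero matrices. -/
theorem trace_zero_is_commutator_PIR {R : Type*} [CommRing R] [IsPrincipalIdealRing R]
    {n : ℕ} (hn : 3 ≤ n)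
    (A : Matrix (Fin n) (Fin n) R) (hA : A.trace = 0) :
    ∃ X Y : Matrix (Fin n) (Fin n) R,
      X.trace = 0 ∧ Y.trace = 0 ∧ X * Y - Y * X = A := by
  obtain ⟨k, rfl⟩ : ∃ k, n = 1 + (k + 2) := ⟨n - 3, by lia⟩
  obtain ⟨β, hrow, hdvd⟩ := exists_basis_toMatrix_dvd
    ((Pi.basisFun R (Fin (1 + (k + 2)))).reindex finSumFinEquiv.symm) (toLin' A)
    (o := .inl 0) (p := .inr 0) (q := .inr 1) (by simp) (by simp) (by simp)
  let Ψ := toLinAlgEquiv'.trans (LinearMap.toMatrixAlgEquiv β)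
  have trace_Ψ (X : Matrix (Fin (1 + (k + 2))) (Fin (1 + (k + 2))) R) :
      (Ψ X).trace = X.trace :=
    (LinearMap.trace_eq_matrix_trace R β _).symm.trans (trace_toLin'_eq X)
  obtain ⟨X, Y, hX, hY, hXY⟩ :=
    exists_commutator_eq_of_dvd (A := Ψ A) ((trace_Ψ A).trans hA) hrow hdvd
  refine ⟨Ψ.symm X, Ψ.symm Y, ?_, ?_, ?_⟩
  · rw [← trace_Ψ, Ψ.apply_symm_apply, hX]
  · rw [← trace_Ψ, Ψ.apply_symm_apply, hY]
  · rw [← map_mul, ← map_mul, ← map_sub, hXY, Ψ.symm_apply_apply]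
end
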